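/- Let K belong to the class R and have exactly one singular vertex t. Let uv be an edge of K with uv ∉ lk(t,K). Then lk(u,K) ∩ lk(v,K) − lk(uv,K) is a nonempty closed subcomplex of K contained in the interiors of the discs lk(u,K) − st(v, lk(u,K)) and lk(v,K) − st(u, lk(v,K)). In particular, there do not exist a vertex z ∈ lk(u,K) ∩ lk(v,K) − lk(uv,K) and a vertex w ∈ lk(uv,K) such that the edge zw lies in lk(u,K) ∩ lk(v,K) − lk(uv,K). -/

import Mathlib

/-- An abstract simplicial complex on vertex set `ℕ`: a finite, downward closed
collection of nonempty finite sets of vertices. -/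
structure SComplex where
  faces : Finset (Finset ℕ)
  not_empty_mem : ∅ ∉ faces
  down_closed : ∀ s ∈ faces, ∀ t ⊆ s, t ≠ ∅ → t ∈ faces

namespace SComplex

/-- The set of vertices of the complex. -/
def vertexSet (K : SComplex) : Finset ℕ := K.faces.sup id

/-- `fnum K i` is the number of `i`-dimensional faces of `K`. -/
def fnum (K : SComplex) (i : ℕ) : ℕ := (K.faces.filter fun s => s.card = i + 1).card

/-- `g₂` for a 3-dimensional complex: `f₁ - 4 f₀ + 10`. -/
def g2 (K : SComplex) : ℤ := (K.fnum 1 : ℤ) - 4 * (K.fnum 0 : ℤ) + 10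

/-- `g₂` for a 2-dimensional complex: `f₁ - 3 f₀ + 6`. -/
def g2surf (K : SComplex) : ℤ := (K.fnum 1 : ℤ) - 3 * (K.fnum 0 : ℤ) + 6

/-- Euler characteristic of a (2-dimensional) complex. -/
def euler (K : SComplex) : ℤ := (K.fnum 0 : ℤ) - (K.fnum 1 : ℤ) + (K.fnum 2 : ℤ)

/-- The link of a face `σ`. -/
def lk (K : SComplex) (σ : Finset ℕ) : SComplex where
  faces := K.faces.filter fun γ => γ ∩ σ = ∅ ∧ γ ∪ σ ∈ K.faces
  not_empty_mem := fun h => K.not_empty_mem (Finset.mem_filter.mp h).1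
  down_closed := by
    intro s hs t hts ht
    rw [Finset.mem_filter] at hs ⊢
    refine ⟨K.down_closed s hs.1 t hts ht, ?_, ?_⟩
    · have h1 : t ∩ σ ⊆ s ∩ σ := Finset.inter_subset_inter hts (Finset.Subset.refl σ)
      rw [hs.2.1] at h1
      exact Finset.subset_empty.mp h1
    · refine K.down_closed (s ∪ σ) hs.2.2 (t ∪ σ)
        (Finset.union_subset_union hts (Finset.Subset.refl σ)) ?_
      intro hc
      exact ht (Finset.union_eq_empty.mp hc).1

/-- The (closed) star of a face `σ`. -/
def st (K : SComplex) (σ : Finset ℕ) : SComplex where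
  faces := K.faces.filter fun α => α ∪ σ ∈ K.faces
  not_empty_mem := fun h => K.not_empty_mem (Finset.mem_filter.mp h).1
  down_closed := by
    intro s hs t hts ht
    rw [Finset.mem_filter] at hs ⊢
    refine ⟨K.down_closed s hs.1 t hts ht, ?_⟩
    refine K.down_closed (s ∪ σ) hs.2 (t ∪ σ)
      (Finset.union_subset_union hts (Finset.Subset.refl σ)) ?_
    intro hc
    exact ht (Finset.union_eq_empty.mp hc).1

/-- A facet is a maximal face. -/
def IsFacet (K : SComplex) (s : Finset ℕ) : Prop :=
  s ∈ K.faces ∧ ∀ t ∈ K.faces, s ⊆ t → s = t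

/-- A pure `d`-dimensional complex: all facets have `d+1` vertices. -/
def IsPure (K : SComplex) (d : ℕ) : Prop :=
  K.faces.Nonempty ∧ ∀ s, K.IsFacet s → s.card = d + 1

/-- Two facets are adjacent if they share a codimension-one face. -/
def FacetAdj (K : SComplex) (s t : Finset ℕ) : Prop :=
  K.IsFacet s ∧ K.IsFacet t ∧ (s ∩ t).card + 1 = s.card

/-- Strong connectedness: any two facets are joined by a chain of facets, consecutive
ones sharing a codimension-one face. -/
def StronglyConnected (K : SComplex) : Prop :=
  ∀ s t, K.IsFacet s → K.IsFacet t → Relation.ReflTransGen K.FacetAdj s t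

/-- Two vertices are adjacent if they span an edge. -/
def VertAdj (K : SComplex) (u v : ℕ) : Prop := ({u, v} : Finset ℕ) ∈ K.faces

/-- Connectedness of a complex (via its 1-skeleton). -/
def Conn (K : SComplex) : Prop :=
  K.faces.Nonempty ∧
    ∀ u v, {u} ∈ K.faces → {v} ∈ K.faces → Relation.ReflTransGen K.VertAdj u v

/-- A normal `d`-pseudomanifold: pure, strongly connected, every `(d-1)`-face is in
exactly two facets, and links of faces of dimension at most `d-2` are connected. -/
def IsNormalPseudomanifold (K : SComplex) (d : ℕ) : Prop :=
  K.IsPure d ∧ K.StronglyConnected ∧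
    (∀ s ∈ K.faces, s.card = d →
      (K.faces.filter fun F => F.card = d + 1 ∧ s ⊆ F).card = 2) ∧
    (∀ s ∈ K.faces, s.card ≤ d - 1 → (K.lk s).Conn)

/-- The geometric realization `|K|`, as a subspace of `ℕ → ℝ`. -/
def realSpace (K : SComplex) : Set (ℕ → ℝ) :=
  {w | (∀ v, 0 ≤ w v) ∧ ∃ s ∈ K.faces, (∀ v, w v ≠ 0 → v ∈ s) ∧ ∑ v ∈ s, w v = 1}

/-- The link of the vertex `v` triangulates the `(d-1)`-sphere. -/
def HasSphereLink (K : SComplex) (d : ℕ) (v : ℕ) : Prop :=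
  Nonempty (↥((K.lk {v}).realSpace) ≃ₜ
    ↥(Metric.sphere (0 : EuclideanSpace ℝ (Fin d)) 1))

/-- A singular vertex of a normal 3-pseudomanifold: its link is not a 2-sphere. -/
def IsSingular (K : SComplex) (v : ℕ) : Prop :=
  {v} ∈ K.faces ∧ ¬ K.HasSphereLink 3 v

/-- `d(σ)`: the number of vertices of the link of `σ`. -/
def deg (K : SComplex) (σ : Finset ℕ) : ℕ := (K.lk σ).fnum 0

/-- The boundary complex of the simplex on vertex set `s`: all nonempty proper subsets. -/
def properFaces (s : Finset ℕ) : Finset (Finset ℕ) :=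
  s.powerset.filter fun t => t ≠ ∅ ∧ t ≠ s

/-- All nonempty faces of the simplex on vertex set `s`. -/
def simplexFaces (s : Finset ℕ) : Finset (Finset ℕ) :=
  s.powerset.filter fun t => t ≠ ∅

/-- Operation (A): a bistellar 2-move on an edge `uv` with `lk(uv) = ∂(abc)`, `abc ∉ K`. -/
def BistellarTwoMove (K K' : SComplex) : Prop :=
  ∃ u v a b c : ℕ,
    ({u, v} : Finset ℕ) ∈ K.faces ∧ u ≠ v ∧
    ({a, b, c} : Finset ℕ).card = 3 ∧
    u ∉ ({a, b, c} : Finset ℕ) ∧ v ∉ ({a, b, c} : Finset ℕ) ∧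
    (K.lk {u, v}).faces = properFaces {a, b, c} ∧
    ({a, b, c} : Finset ℕ) ∉ K.faces ∧
    K'.faces = ((K.faces.filter fun α => ¬ ({u, v} : Finset ℕ) ⊆ α) ∪
      simplexFaces (insert u {a, b, c})) ∪ simplexFaces (insert v {a, b, c})

/-- The faces of the boundary complex of a pure `d`-dimensional complex with face set `F`:
faces contained in some `(d-1)`-face lying in exactly one facet. -/
def bdryFaces (F : Finset (Finset ℕ)) (d : ℕ) : Finset (Finset ℕ) :=
  F.filter fun s => ∃ r ∈ F, s ⊆ r ∧ r.card = d ∧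
    (F.filter fun t => t.card = d + 1 ∧ r ⊆ t).card = 1

/-- The faces of the cone with apex `w` over the complex with face set `F`. -/
def coneFaces (w : ℕ) (F : Finset (Finset ℕ)) : Finset (Finset ℕ) :=
  (F ∪ F.image (insert w)) ∪ {{w}}

/-- `K₁` is obtained from the normal `d`-pseudomanifold `K` by contracting the
edge `uv` (satisfying the link condition): delete all faces containing `u` or `v`
and cone off the boundary of the result with a new vertex `w`. -/
def EdgeContractionAt (d : ℕ) (K : SComplex) (u v : ℕ) (K₁ : SComplex) : Prop :=
  ({u, v} : Finset ℕ) ∈ K.faces ∧ u ≠ v ∧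
  (K.lk {u}).faces ∩ (K.lk {v}).faces = (K.lk {u, v}).faces ∧
  ∃ w, w ∉ K.vertexSet ∧
    K₁.faces = (K.faces.filter fun α => u ∉ α ∧ v ∉ α) ∪
      coneFaces w (bdryFaces (K.faces.filter fun α => u ∉ α ∧ v ∉ α) d)

/-- Operation (B): an edge contraction in a 3-dimensional complex. -/
def EdgeContraction (K K₁ : SComplex) : Prop := ∃ u v, EdgeContractionAt 3 K u v K₁

/-- The class `R`: normal 3-pseudomanifolds with one or two singular vertices such that
(i) if `K` contains the boundary of a 3-simplex then it contains the 3-simplex and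
(ii) no normal 3-pseudomanifold with smaller `g₂` is obtained from `K` by a
bistellar 2-move, an edge contraction, an edge expansion followed by a bistellar
2-move, or an edge expansion followed by an edge contraction. -/
def InClassR (K : SComplex) : Prop :=
  K.IsNormalPseudomanifold 3 ∧
  1 ≤ {v | K.IsSingular v}.ncard ∧ {v | K.IsSingular v}.ncard ≤ 2 ∧
  (∀ s : Finset ℕ, s.card = 4 → (∀ t ∈ properFaces s, t ∈ K.faces) → s ∈ K.faces) ∧
  (∀ K' : SComplex, K'.IsNormalPseudomanifold 3 →
    (BistellarTwoMove K K' ∨ EdgeContraction K K' ∨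
      (∃ M, EdgeContraction M K ∧ BistellarTwoMove M K') ∨
      (∃ M, EdgeContraction M K ∧ EdgeContraction M K')) →
    K.g2 ≤ K'.g2)

/-!
The key point is that a triangle `C` all of whose edges lie in the link of a vertex `w` with
`|lk w| ≅ S²` is a face of `K`. A sphere minus a point is simply connected, so every
`ℤ/2`-cocycle on `lk w` is a coboundary, and hence the triangles of `lk w` can be coloured with
two colours that change exactly across the edges of `C`: this is the Jordan curve theorem for `C`.
If `C` were not a face, one could split `w` along `C` into two adjacent vertices, one for each
colour, and then replace the new edge by `C` in a bistellar 2-move; the result would be a normal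
3-pseudomanifold with smaller `g₂`, which membership in `R` forbids.

The contraction of `uv` changes `g₂` by `3 - deg uv`. If the link condition
`lk u ∩ lk v = lk uv` held, then `deg uv = 3`, and the triangle `lk uv` would be filled by the key
point and so would be joined with `uv` to a 4-simplex. Hence the difference of the links is
nonempty. If a face `γ` of the difference contained a vertex `w` of `lk uv`, the key point in
`lk w` would give either `uvγ ∈ K`, or all the facets of the boundary of a 4-simplex; in the latter
case `K` is that boundary, and by symmetry all its vertex links are spheres.
-/

-- The cocycle glues the sets `U i × G` to a covering of `A`, which has a section because `A` is
-- simply connected.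
theorem exists_continuousOn_cocycle_trivialization {ι A G : Type} [TopologicalSpace A]
    [SimplyConnectedSpace A] [LocallyPathConnectedSpace A] [AddGroup G] [TopologicalSpace G]
    [DiscreteTopology G] (U : ι → Set A) (hU : ∀ i, IsOpen (U i)) (hcov : ∀ a, ∃ i, a ∈ U i)
    (g : ι → ι → G) (hg : ∀ i j k, (U i ∩ U j ∩ U k).Nonempty → g i j + g j k = g i k) :
    ∃ s : ι → A → G, (∀ i, ContinuousOn (s i) (U i)) ∧
      ∀ i j, ∀ a ∈ U i ∩ U j, s j a = s i a + g i j := by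
  choose index hindex using hcov
  let Z : FiberBundleCore ι A G :=
    { baseSet := U
      isOpen_baseSet := hU
      indexAt := index
      mem_baseSet_at := hindex
      coordChange := fun i j _ b => b + g i j
      coordChange_self := fun i x hx b => by
        have hii := hg i i i ⟨x, ⟨hx, hx⟩, hx⟩
        rw [add_eq_left.mp hii, add_zero]
      continuousOn_coordChange := fun i j =>
        ((continuous_of_discreteTopology (f := (· + g i j))).comp continuous_snd).continuousOn
      coordChange_comp := fun i j k x hx b => by rw [add_assoc, hg i j k ⟨x, hx⟩] }
  have hcovering : IsCoveringMap (Bundle.TotalSpace.proj : Z.TotalSpace → A) :=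
    FiberBundle.isCoveringMap (F := G) (E := Z.Fiber)
  obtain ⟨a₀⟩ : Nonempty A := inferInstance
  obtain ⟨F, ⟨-, hF⟩, -⟩ := hcovering.existsUnique_continuousMap_lifts (ContinuousMap.id A) a₀
    (⟨a₀, (0 : G)⟩ : Z.TotalSpace) rfl
  have hproj : ∀ a, (F a).proj = a := congrFun hF
  refine ⟨fun i a => (Z.localTriv i (F a)).2, fun i => ?_, fun i j a ha => ?_⟩
  · refine continuous_snd.comp_continuousOn
      ((Z.localTriv i).continuousOn_toFun.comp F.continuous.continuousOn fun a ha => ?_)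
    rw [(Z.localTriv i).mem_source]
    change (F a).proj ∈ U i
    rwa [hproj]
  · have transition : ∀ b : G, b + g (index (F a).proj) j = b + g (index (F a).proj) i + g i j :=
      fun b => by rw [hproj, add_assoc, hg _ _ _ ⟨a, ⟨hindex a, ha.1⟩, ha.2⟩]
    exact transition (F a).2

theorem exists_face_of_mem_realSpace {L : SComplex} {p : ℕ → ℝ} (hp : p ∈ L.realSpace) :
    ∃ s ∈ L.faces, ∀ x, 0 < p x → x ∈ s := by
  obtain ⟨-, s, hs, hsupp, -⟩ := hp
  exact ⟨s, hs, fun x hx => hsupp x hx.ne'⟩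

theorem exists_pos_of_mem_realSpace {L : SComplex} {p : ℕ → ℝ} (hp : p ∈ L.realSpace) :
    ∃ x, 0 < p x := by
  obtain ⟨-, s, -, -, hsum⟩ := hp
  by_contra! h
  linarith [Finset.sum_nonpos fun x (_ : x ∈ s) => h x]

theorem eq_of_continuousOn_pos_of_mem_segment {G : Type} [TopologicalSpace G]
    [DiscreteTopology G] {A : Set (ℕ → ℝ)} {x : ℕ} {a b : ℕ → ℝ} (hseg : segment ℝ a b ⊆ A)
    {f : A → G} (hf : ContinuousOn f {p | 0 < p.1 x}) {p q : A} (hp : 0 < p.1 x)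
    (hq : 0 < q.1 x) (hp' : p.1 ∈ segment ℝ a b) (hq' : q.1 ∈ segment ℝ a b) : f p = f q := by
  let S : Set (ℕ → ℝ) := segment ℝ a b ∩ {p | 0 < p x}
  have hS : IsPreconnected S := ((convex_segment _ _).inter
    (convex_halfSpace_gt (f := fun p : ℕ → ℝ => p x) ⟨fun _ _ => rfl, fun _ _ => rfl⟩
      0)).isPreconnected
  have hSA : IsPreconnected ((↑) ⁻¹' S : Set A) := by
    rwa [← Topology.IsInducing.subtypeVal.isPreconnected_image, Subtype.image_preimage_coe,
      Set.inter_eq_right.mpr (Set.inter_subset_left.trans hseg)]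
  exact hSA.constant (hf.mono fun r hr => hr.2) ⟨hp', hp⟩ ⟨hq', hq⟩

theorem exists_coboundary {G : Type} [AddGroup G] {L : SComplex} {A : Set (ℕ → ℝ)}
    [SimplyConnectedSpace A] [LocallyPathConnectedSpace A] (hA : A ⊆ L.realSpace)
    (hseg : ∀ x y, {x, y} ∈ L.faces → segment ℝ (Pi.single x 1) (Pi.single y 1) ⊆ A)
    (g : ℕ → ℕ → G) (hg : ∀ x y z, {x, y, z} ∈ L.faces → g x y + g y z = g x z) :
    ∃ c : ℕ → G, ∀ x y, {x, y} ∈ L.faces → c y = c x + g x y := by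
  let : TopologicalSpace G := ⊥
  have : DiscreteTopology G := ⟨rfl⟩
  let U : ℕ → Set A := fun x => {p | 0 < p.1 x}
  have hU : ∀ x, IsOpen (U x) := fun x =>
    isOpen_lt continuous_const ((continuous_apply x).comp continuous_subtype_val)
  obtain ⟨s, hs, hsg⟩ := exists_continuousOn_cocycle_trivialization U hU
    (fun p => exists_pos_of_mem_realSpace (hA p.2)) g (by
      rintro x y z ⟨p, ⟨hx, hy⟩, hz⟩
      obtain ⟨t, ht, hpos⟩ := exists_face_of_mem_realSpace (hA p.2)
      refine hg x y z (L.down_closed t ht _ ?_ (by simp))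
      simp [Finset.insert_subset_iff, hpos x hx, hpos y hy, hpos z hz])
  classical
  let vertex : ℕ → ℕ → ℝ := fun x => Pi.single x 1
  refine ⟨fun x => if hx : vertex x ∈ A then s x ⟨vertex x, hx⟩ else 0, fun x y hxy => ?_⟩
  have hmem := hseg x y hxy
  have hx : vertex x ∈ A := hmem (left_mem_segment ℝ _ _)
  have hy : vertex y ∈ A := hmem (right_mem_segment ℝ _ _)
  let m : A := ⟨midpoint ℝ (vertex x) (vertex y), hmem (midpoint_mem_segment _ _)⟩
  have hmx : m ∈ U x := by
    simp only [U, m, vertex, Set.mem_ofPred_eq, midpoint_eq_smul_add]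
    by_cases h : x = y <;> simp [h]
  have hmy : m ∈ U y := by
    simp only [U, m, vertex, Set.mem_ofPred_eq, midpoint_eq_smul_add]
    by_cases h : y = x <;> simp [h]
  have hcx : s x m = s x ⟨vertex x, hx⟩ :=
    eq_of_continuousOn_pos_of_mem_segment hmem (hs x) hmx (by simp [vertex])
      (midpoint_mem_segment _ _) (left_mem_segment ℝ _ _)
  have hcy : s y m = s y ⟨vertex y, hy⟩ :=
    eq_of_continuousOn_pos_of_mem_segment hmem (hs y) hmy (by simp [vertex])
      (midpoint_mem_segment _ _) (right_mem_segment ℝ _ _)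
  simp only [dif_pos hx, dif_pos hy]
  rw [← hcx, ← hcy, hsg x y m ⟨hmx, hmy⟩]

/-- The barycentre of the simplex with vertex set `T`. -/
noncomputable def barycentre (T : Finset ℕ) : ℕ → ℝ := fun x => if x ∈ T then (T.card : ℝ)⁻¹ else 0

theorem barycentre_mem_realSpace {L : SComplex} {T : Finset ℕ} (hT : T ∈ L.faces) :
    barycentre T ∈ L.realSpace := by
  have hcard : (T.card : ℝ) ≠ 0 := by
    rw [Nat.cast_ne_zero, Finset.card_ne_zero, Finset.nonempty_iff_ne_empty]
    rintro rfl
    exact L.not_empty_mem hT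
  refine ⟨fun x => ?_, T, hT, fun x hx => ?_, ?_⟩
  · unfold barycentre
    positivity
  · by_contra h
    simp [barycentre, h] at hx
  · simp [barycentre, hcard]

theorem segment_subset_realSpace {L : SComplex} {x y : ℕ} (hxy : {x, y} ∈ L.faces) :
    segment ℝ (Pi.single x 1) (Pi.single y 1) ⊆ L.realSpace := by
  rintro _ ⟨a, b, ha, hb, hab, rfl⟩
  refine ⟨fun v => ?_, {x, y}, hxy, fun v hv => ?_, ?_⟩
  · simp only [Pi.add_apply, Pi.smul_apply, Pi.single_apply, smul_eq_mul]
    positivity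
  · by_contra h
    simp_all
  · simp [Finset.sum_add_distrib, Pi.single_apply, hab]

theorem barycentre_notMem_segment {T : Finset ℕ} (hT : 2 < T.card) (x y : ℕ) :
    barycentre T ∉ segment ℝ (Pi.single x 1) (Pi.single y 1) := by
  rintro ⟨a, b, -, -, -, h⟩
  obtain ⟨v, hv, hvxy⟩ : ∃ v ∈ T, v ∉ ({x, y} : Finset ℕ) :=
    Finset.exists_mem_notMem_of_card_lt_card (Finset.card_le_two.trans_lt hT)
  simp only [Finset.mem_insert, Finset.mem_singleton, not_or] at hvxy
  have hcard : (0 : ℝ) = T.card := by simpa [barycentre, hv, hvxy] using congrFun h v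
  norm_cast at hcard
  omega

theorem nonempty_homeomorph_sphere_diff_singleton {X : Type*} [TopologicalSpace X] {n : ℕ}
    (h : X ≃ₜ Metric.sphere (0 : EuclideanSpace ℝ (Fin (n + 1))) 1) (p : X) :
    Nonempty ({q // q ≠ p} ≃ₜ EuclideanSpace ℝ (Fin n)) := by
  have : Fact (Module.finrank ℝ (EuclideanSpace ℝ (Fin (n + 1))) = n + 1) := ⟨by simp⟩
  let e := stereographic' n (h p)
  have hsource : ∀ q, q ≠ p ↔ h q ∈ e.source := fun q => by simp [e]
  exact ⟨(h.subtype hsource).trans <| e.toHomeomorphSourceTarget.trans <|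
    (Homeomorph.setCongr (stereographic'_target _)).trans (Homeomorph.Set.univ _)⟩

theorem exists_coboundary_of_homeomorph_sphere {G : Type} [AddGroup G] {L : SComplex}
    (h : L.realSpace ≃ₜ Metric.sphere (0 : EuclideanSpace ℝ (Fin 3)) 1) {T : Finset ℕ}
    (hT : T ∈ L.faces) (hT3 : T.card = 3) (g : ℕ → ℕ → G)
    (hg : ∀ x y z, {x, y, z} ∈ L.faces → g x y + g y z = g x z) :
    ∃ c : ℕ → G, ∀ x y, {x, y} ∈ L.faces → c y = c x + g x y := by
  let p : L.realSpace := ⟨barycentre T, barycentre_mem_realSpace hT⟩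
  obtain ⟨e⟩ := nonempty_homeomorph_sphere_diff_singleton h p
  let A : Set (ℕ → ℝ) := (↑) '' {q : L.realSpace | q ≠ p}
  let f : A ≃ₜ EuclideanSpace ℝ (Fin 2) :=
    ((Topology.IsEmbedding.subtypeVal.homeomorphImage {q : L.realSpace | q ≠ p}).symm).trans e
  have : SimplyConnectedSpace A := f.toHomotopyEquiv.simplyConnectedSpace
  have : LocallyPathConnectedSpace A := f.isOpenEmbedding.locallyPathConnectedSpace
  refine exists_coboundary (A := A) (by simp [A]) (fun x y hxy q hq => ?_) g hg
  refine ⟨⟨q, segment_subset_realSpace hxy hq⟩, fun hqp => ?_, rfl⟩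
  have hq_eq : q = barycentre T := congrArg Subtype.val hqp
  exact barycentre_notMem_segment (by omega) x y (hq_eq ▸ hq)

theorem card_inter_lt {s t : Finset ℕ} (hne : s ≠ t) (hcard : s.card = t.card) :
    (s ∩ t).card < s.card :=
  Finset.card_lt_card <| Finset.inter_subset_left.ssubset_of_ne fun h =>
    hne (Finset.eq_of_subset_of_card_le (Finset.inter_eq_left.mp h) hcard.ge)

theorem exists_difference_of_local_primitive {G : Type*} [AddCommGroup G] {L : SComplex}
    (χ : Finset ℕ → Finset ℕ → G) (h : ℕ → Finset ℕ → G)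
    (hloc : ∀ x, ∀ T ∈ L.faces, ∀ T' ∈ L.faces, T.card = 3 → T'.card = 3 → x ∈ T ∩ T' →
      (T ∩ T').card = 2 → h x T' = h x T + χ T T') (x y : ℕ) :
    ∃ d, ∀ T ∈ L.faces, T.card = 3 → x ∈ T → y ∈ T → h y T = h x T + d := by
  by_cases hT : ∃ T ∈ L.faces, T.card = 3 ∧ x ∈ T ∧ y ∈ T
  · obtain ⟨T, hT, hT3, hx, hy⟩ := hT
    refine ⟨h y T - h x T, fun T' hT' hT'3 hx' hy' => ?_⟩
    obtain rfl | hTT' := eq_or_ne T T'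
    · abel
    obtain rfl | hxy := eq_or_ne x y
    · abel
    have hinter : (T ∩ T').card = 2 := by
      have hle : ({x, y} : Finset ℕ).card ≤ (T ∩ T').card := Finset.card_le_card (by grind)
      have hlt := card_inter_lt hTT' (hT3.trans hT'3.symm)
      rw [Finset.card_pair hxy] at hle
      omega
    rw [hloc y T hT T' hT' hT3 hT'3 (by grind) hinter,
      hloc x T hT T' hT' hT3 hT'3 (by grind) hinter]
    abel
  · exact ⟨0, fun T hT' hT3 hx hy => (hT ⟨T, hT', hT3, hx, hy⟩).elim⟩

theorem exists_global_primitive {G : Type*} [AddCommGroup G] {L : SComplex}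
    (hpure : ∀ s ∈ L.faces, ∃ T ∈ L.faces, s ⊆ T ∧ T.card = 3)
    (hcob : ∀ g : ℕ → ℕ → G, (∀ x y z, {x, y, z} ∈ L.faces → g x y + g y z = g x z) →
      ∃ c : ℕ → G, ∀ x y, {x, y} ∈ L.faces → c y = c x + g x y)
    (χ : Finset ℕ → Finset ℕ → G) (h : ℕ → Finset ℕ → G)
    (hloc : ∀ x, ∀ T ∈ L.faces, ∀ T' ∈ L.faces, T.card = 3 → T'.card = 3 → x ∈ T ∩ T' →
      (T ∩ T').card = 2 → h x T' = h x T + χ T T') :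
    ∃ H : Finset ℕ → G, ∀ T ∈ L.faces, ∀ T' ∈ L.faces, T.card = 3 → T'.card = 3 →
      (T ∩ T').card = 2 → H T' = H T + χ T T' := by
  choose g hg using exists_difference_of_local_primitive χ h hloc
  obtain ⟨c, hc⟩ := hcob g fun x y z hxyz => by
    obtain ⟨T, hT, hsub, hT3⟩ := hpure _ hxyz
    simp only [Finset.insert_subset_iff, Finset.singleton_subset_iff] at hsub
    have hyz := hg y z T hT hT3 hsub.2.1 hsub.2.2
    rwa [hg x y T hT hT3 hsub.1 hsub.2.1, hg x z T hT hT3 hsub.1 hsub.2.2, add_assoc,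
      add_right_inj, eq_comm] at hyz
  have exists_value : ∀ T, ∃ a, T ∈ L.faces → T.card = 3 → ∀ x ∈ T, h x T = a + c x := by
    intro T
    obtain rfl | ⟨x, hx⟩ := T.eq_empty_or_nonempty
    · simp
    refine ⟨h x T - c x, fun hT hT3 y hy => ?_⟩
    rw [hg x y T hT hT3 hx hy, hc x y (L.down_closed T hT _ (by grind) (by simp))]
    abel
  choose H hH using exists_value
  refine ⟨H, fun T hT T' hT' hT3 hT'3 hTT' => ?_⟩
  obtain ⟨x, hx⟩ : (T ∩ T').Nonempty := Finset.card_pos.mp (by omega)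
  have key := hloc x T hT T' hT' hT3 hT'3 hx hTT'
  rw [hH T' hT' hT'3 x (Finset.mem_inter.mp hx).2, hH T hT hT3 x (Finset.mem_inter.mp hx).1] at key
  rw [← add_left_inj (c x), key]
  abel

theorem exists_eq_pair_of_mem {s : Finset ℕ} {x : ℕ} (hx : x ∈ s) (hs : s.card = 2) :
    ∃ y, x ≠ y ∧ s = {x, y} := by
  obtain ⟨p, q, hpq, rfl⟩ := Finset.card_eq_two.mp hs
  obtain rfl | rfl : x = p ∨ x = q := by simpa using hx
  · exact ⟨q, hpq, rfl⟩
  · exact ⟨p, hpq.symm, Finset.pair_comm p x⟩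

theorem exists_eq_triple_of_mem {s : Finset ℕ} {x : ℕ} (hx : x ∈ s) (hs : s.card = 3) :
    ∃ a b, x ≠ a ∧ x ≠ b ∧ a ≠ b ∧ s = {x, a, b} := by
  obtain ⟨a, b, hab, hsab⟩ := Finset.card_eq_two.mp
    (show (s.erase x).card = 2 by rw [Finset.card_erase_of_mem hx, hs])
  have ha : a ∈ s.erase x := by simp [hsab]
  have hb : b ∈ s.erase x := by simp [hsab]
  exact ⟨a, b, (Finset.ne_of_mem_erase ha).symm, (Finset.ne_of_mem_erase hb).symm, hab,
    by rw [← hsab, Finset.insert_erase hx]⟩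

theorem pair_right_inj {x y z : ℕ} : ({x, y} : Finset ℕ) = {x, z} ↔ y = z := by
  refine ⟨fun h => ?_, fun h => h ▸ rfl⟩
  have hy : y ∈ ({x, z} : Finset ℕ) := h ▸ by simp
  have hz : z ∈ ({x, y} : Finset ℕ) := h ▸ by simp
  grind

theorem triangle_indicator_add_of_thin {L : SComplex}
    (hthin : ∀ r, r.card = 2 → (L.faces.filter fun T => T.card = 3 ∧ r ⊆ T).card ≤ 2)
    {x b d : ℕ} (hT₀ : {x, b, d} ∈ L.faces) (hxb : x ≠ b) (hxd : x ≠ d) (hbd : b ≠ d)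
    {T T' : Finset ℕ} (hT : T ∈ L.faces) (hT' : T' ∈ L.faces) (hT3 : T.card = 3)
    (hT'3 : T'.card = 3) (hx : x ∈ T ∩ T') (hTT' : (T ∩ T').card = 2) :
    (if T' = {x, b, d} then 1 else 0 : ZMod 2) = (if T = {x, b, d} then 1 else 0) +
      ((if T ∩ T' = {x, b} then 1 else 0) + if T ∩ T' = {x, d} then 1 else 0) := by
  obtain ⟨y, hxy, hy⟩ := exists_eq_pair_of_mem hx hTT'
  have hne : T ≠ T' := by
    rintro rfl
    rw [Finset.inter_self] at hTT'
    omega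
  have hyT : y ∈ T ∧ y ∈ T' := Finset.mem_inter.mp (hy ▸ by simp)
  simp only [hy, pair_right_inj]
  by_cases hyT₀ : y = b ∨ y = d
  · have one_eq : T = {x, b, d} ∨ T' = {x, b, d} := by
      by_contra! hT₁
      have hsub : ({x, y} : Finset ℕ) ⊆ {x, b, d} := by
        obtain rfl | rfl := hyT₀ <;> simp [Finset.insert_subset_iff]
      have hthree : 2 < (L.faces.filter fun F => F.card = 3 ∧ T ∩ T' ⊆ F).card :=
        Finset.two_lt_card.mpr ⟨T, by simp [hT, hT3], T', by simp [hT', hT'3], {x, b, d},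
          by simp [hT₀, hxb, hxd, hbd, hy, hsub], hne, hT₁.1, hT₁.2⟩
      exact absurd (hthin _ hTT') (by omega)
    obtain rfl | rfl := one_eq <;> obtain rfl | rfl := hyT₀ <;>
      simp [hne, hne.symm, hbd, hbd.symm, CharTwo.add_self_eq_zero]
  · have hyT₀' : y ∉ ({x, b, d} : Finset ℕ) := by simp [hxy.symm, not_or.mp hyT₀]
    have hT₁ : T ≠ {x, b, d} := fun h => hyT₀' (h ▸ hyT.1)
    have hT₂ : T' ≠ {x, b, d} := fun h => hyT₀' (h ▸ hyT.2)
    simp [hT₁, hT₂, not_or.mp hyT₀]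

theorem exists_local_primitive {L : SComplex}
    (hthin : ∀ r, r.card = 2 → (L.faces.filter fun T => T.card = 3 ∧ r ⊆ T).card ≤ 2)
    {x a b : ℕ} (hab : Relation.ReflTransGen (L.lk {x}).VertAdj a b) :
    ∃ h : Finset ℕ → ZMod 2, ∀ T ∈ L.faces, ∀ T' ∈ L.faces, T.card = 3 → T'.card = 3 →
      x ∈ T ∩ T' → (T ∩ T').card = 2 → h T' = h T +
        ((if T ∩ T' = {x, a} then 1 else 0) + if T ∩ T' = {x, b} then 1 else 0) := by
  induction hab with
  | refl => exact ⟨fun _ => 0, fun T _ T' _ _ _ _ _ => by simp [CharTwo.add_self_eq_zero]⟩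
  | @tail b d _ hbd ih =>
    obtain ⟨h, hh⟩ := ih
    obtain rfl | hne := eq_or_ne b d
    · exact ⟨h, hh⟩
    have hlk := Finset.mem_filter.mp hbd
    have hx : x ≠ b ∧ x ≠ d := by simpa [Finset.inter_singleton] using hlk.2.1
    have hT₀ : {x, b, d} ∈ L.faces := by
      have := hlk.2.2
      rwa [Finset.union_comm] at this
    refine ⟨fun T => h T + if T = {x, b, d} then 1 else 0,
      fun T hT T' hT' hT3 hT'3 hxT hTT' => ?_⟩
    beta_reduce
    rw [hh T hT T' hT' hT3 hT'3 hxT hTT', triangle_indicator_add_of_thin hthin hT₀ hx.1 hx.2 hne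
      hT hT' hT3 hT'3 hxT hTT']
    linear_combination CharTwo.two_eq_zero (R := ZMod 2) * (if T ∩ T' = {x, b} then 1 else 0)

theorem pair_mem_lk_singleton {K : SComplex} {x y z : ℕ} (hxy : x ≠ y) (hxz : x ≠ z) :
    {y, z} ∈ (K.lk {x}).faces ↔ {x, y, z} ∈ K.faces := by
  have hunion : ({y, z} : Finset ℕ) ∪ {x} = {x, y, z} := Finset.union_comm _ _
  rw [lk, Finset.mem_filter, hunion]
  refine ⟨fun h => h.2.2, fun h => ⟨K.down_closed _ h _ (by simp) (by simp), ?_, h⟩⟩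
  simp [hxy, hxz]

theorem exists_local_primitive_triangle {L : SComplex}
    (hthin : ∀ r, r.card = 2 → (L.faces.filter fun T => T.card = 3 ∧ r ⊆ T).card ≤ 2)
    (hlink : ∀ x, {x} ∈ L.faces → (L.lk {x}).Conn) {C : Finset ℕ} (hC3 : C.card = 3)
    (hC : ∀ x ∈ C, ∀ y ∈ C, {x, y} ∈ L.faces) (x : ℕ) :
    ∃ k : Finset ℕ → ZMod 2, ∀ T ∈ L.faces, ∀ T' ∈ L.faces, T.card = 3 → T'.card = 3 →
      x ∈ T ∩ T' → (T ∩ T').card = 2 → k T' = k T + if T ∩ T' ⊆ C then 1 else 0 := by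
  by_cases hx : x ∈ C
  · obtain ⟨a, b, hxa, hxb, hab, rfl⟩ := exists_eq_triple_of_mem hx hC3
    have ha : {a} ∈ (L.lk {x}).faces := by
      simpa using (pair_mem_lk_singleton hxa hxa).mpr (by simpa using hC x hx a (by simp))
    have hb : {b} ∈ (L.lk {x}).faces := by
      simpa using (pair_mem_lk_singleton hxb hxb).mpr (by simpa using hC x hx b (by simp))
    obtain ⟨k, hk⟩ := exists_local_primitive hthin <|
      (hlink x (by simpa using hC x hx x hx)).2 a b ha hb
    refine ⟨k, fun T hT T' hT' hT3 hT'3 hxT hTT' => ?_⟩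
    obtain ⟨y, hxy, hy⟩ := exists_eq_pair_of_mem hxT hTT'
    have hsub : ({x, y} : Finset ℕ) ⊆ {x, a, b} ↔ y = a ∨ y = b := by
      simp [Finset.insert_subset_iff, hxy.symm]
    rw [hk T hT T' hT' hT3 hT'3 hxT hTT', hy]
    simp only [pair_right_inj, hsub]
    obtain rfl | hya := eq_or_ne y a
    · simp [hab]
    · simp [hya]
  · exact ⟨0, fun T _ T' _ _ _ hxT _ => by
      rw [if_neg fun h => hx (h hxT), add_zero]
      rfl⟩

theorem exists_two_colouring {L : SComplex}
    (h : L.realSpace ≃ₜ Metric.sphere (0 : EuclideanSpace ℝ (Fin 3)) 1)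
    (hpure : ∀ s ∈ L.faces, ∃ T ∈ L.faces, s ⊆ T ∧ T.card = 3)
    (hthin : ∀ r, r.card = 2 → (L.faces.filter fun T => T.card = 3 ∧ r ⊆ T).card ≤ 2)
    (hlink : ∀ x, {x} ∈ L.faces → (L.lk {x}).Conn) {C : Finset ℕ} (hC3 : C.card = 3)
    (hC : ∀ x ∈ C, ∀ y ∈ C, {x, y} ∈ L.faces) :
    ∃ H : Finset ℕ → Bool, ∀ T ∈ L.faces, ∀ T' ∈ L.faces, T.card = 3 → T'.card = 3 →
      (T ∩ T').card = 2 → (H T' = H T ↔ ¬ T ∩ T' ⊆ C) := by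
  choose k hk using exists_local_primitive_triangle hthin hlink hC3 hC
  obtain ⟨x, hx⟩ : C.Nonempty := Finset.card_pos.mp (by omega)
  obtain ⟨T, hT, -, hT3⟩ := hpure _ (hC x hx x hx)
  obtain ⟨H, hH⟩ := exists_global_primitive hpure
    (fun g hg => exists_coboundary_of_homeomorph_sphere h hT hT3 g hg) _ k hk
  refine ⟨fun T => decide (H T = 0), fun T hT T' hT' hT3 hT'3 hTT' => ?_⟩
  beta_reduce
  rw [hH T hT T' hT' hT3 hT'3 hTT']
  generalize H T = a
  by_cases hsub : T ∩ T' ⊆ C <;> simp only [hsub] <;> revert a <;> decide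

/-- The vertices `z ∉ σ` that span a face together with `σ`, i.e. the vertices of the link of `σ`
(of `K` itself when `σ = ∅`). -/
def nbrs (K : SComplex) (σ : Finset ℕ) : Finset ℕ :=
  K.vertexSet.filter fun z => z ∉ σ ∧ insert z σ ∈ K.faces

/-- The subcomplex of the faces that avoid the vertex `v`. -/
def del (K : SComplex) (v : ℕ) : SComplex where
  faces := K.faces.filter fun s => v ∉ s
  not_empty_mem h := K.not_empty_mem (Finset.mem_filter.mp h).1
  down_closed s hs t hts ht := by
    rw [Finset.mem_filter] at hs ⊢
    exact ⟨K.down_closed s hs.1 t hts ht, fun h => hs.2 (hts h)⟩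

/-- The second half of `Conn` for the link of `σ`: any two of its vertices are joined by a path.
The set `σ` need not be a face, and `σ = ∅` stands for `K` itself. -/
def LinkConn (K : SComplex) (σ : Finset ℕ) : Prop :=
  ∀ x ∈ K.nbrs σ, ∀ y ∈ K.nbrs σ, Relation.ReflTransGen (K.lk σ).VertAdj x y

/-- Two tetrahedra of `K` containing `σ` share a triangle. -/
def FacetAdjOver (K : SComplex) (σ F G : Finset ℕ) : Prop :=
  F ∈ K.faces ∧ G ∈ K.faces ∧ F.card = 4 ∧ G.card = 4 ∧ σ ⊆ F ∩ G ∧ (F ∩ G).card = 3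

/-- Normal 3-pseudomanifolds in terms of neighbours and paths; equivalent to
`IsNormalPseudomanifold K 3`. -/
structure Normal3 (K : SComplex) : Prop where
  nonempty : K.faces.Nonempty
  exists_facet : ∀ s ∈ K.faces, ∃ F ∈ K.faces, s ⊆ F ∧ F.card = 4
  card_nbrs : ∀ r ∈ K.faces, r.card = 3 → (K.nbrs r).card = 2
  linkConn : ∀ σ, σ.card ≤ 2 → K.LinkConn σ

section Basic

variable {K : SComplex} {s t σ : Finset ℕ} {u v x y z : ℕ}

theorem mem_of_subset (hs : s ∈ K.faces) (hts : t ⊆ s) (ht : t.Nonempty) : t ∈ K.faces :=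
  K.down_closed s hs t hts ht.ne_empty

theorem nonempty_of_mem (hs : s ∈ K.faces) : s.Nonempty :=
  Finset.nonempty_iff_ne_empty.mpr fun h => K.not_empty_mem (h ▸ hs)

theorem mem_nbrs : z ∈ K.nbrs σ ↔ z ∉ σ ∧ insert z σ ∈ K.faces := by
  rw [nbrs, Finset.mem_filter, and_iff_right_iff_imp]
  exact fun h => Finset.mem_sup.mpr ⟨_, h.2, Finset.mem_insert_self z σ⟩

theorem mem_lk : s ∈ (K.lk σ).faces ↔ s.Nonempty ∧ Disjoint s σ ∧ s ∪ σ ∈ K.faces := by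
  rw [lk, Finset.mem_filter, Finset.disjoint_iff_inter_eq_empty]
  exact ⟨fun h => ⟨nonempty_of_mem h.1, h.2⟩,
    fun h => ⟨mem_of_subset h.2.2 Finset.subset_union_left h.1, h.2⟩⟩

theorem singleton_mem_lk : {x} ∈ (K.lk σ).faces ↔ x ∈ K.nbrs σ := by
  simp [mem_lk, mem_nbrs]

theorem vertAdj_lk :
    (K.lk σ).VertAdj x y ↔ x ∉ σ ∧ y ∉ σ ∧ insert x (insert y σ) ∈ K.faces := by
  simp [VertAdj, mem_lk, Finset.insert_union, and_assoc]

theorem mem_del : s ∈ (K.del v).faces ↔ s ∈ K.faces ∧ v ∉ s := Finset.mem_filter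

theorem nbrs_del (h : v ∉ σ) : (K.del v).nbrs σ = (K.nbrs σ).erase v := by
  ext z
  simp only [mem_nbrs, mem_del, Finset.mem_erase, Finset.mem_insert, not_or]
  tauto

theorem mem_vertexSet : v ∈ K.vertexSet ↔ {v} ∈ K.faces := by
  simp only [vertexSet, Finset.mem_sup, id]
  exact ⟨fun ⟨s, hs, hv⟩ => mem_of_subset hs (by simpa) (by simp), fun h => ⟨_, h, by simp⟩⟩

theorem card_cofaces (K : SComplex) (r : Finset ℕ) :
    (K.faces.filter fun F => F.card = r.card + 1 ∧ r ⊆ F).card = (K.nbrs r).card := by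
  have himage : (K.faces.filter fun F => F.card = r.card + 1 ∧ r ⊆ F) =
      (K.nbrs r).image (insert · r) := by
    ext F
    simp only [Finset.mem_filter, Finset.mem_image, mem_nbrs]
    constructor
    · rintro ⟨hF, hcard, hr⟩
      obtain ⟨z, hz, rfl⟩ := Finset.exists_eq_insert_iff.mpr ⟨hr, hcard.symm⟩
      exact ⟨z, ⟨hz, hF⟩, rfl⟩
    · rintro ⟨z, ⟨hz, hF⟩, rfl⟩
      exact ⟨hF, Finset.card_insert_of_notMem hz, Finset.subset_insert z r⟩
  rw [himage, Finset.card_image_of_injOn]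
  intro z hz z' _ h
  exact (Finset.insert_inj (mem_nbrs.mp hz).1).mp h

theorem fnum_zero_eq_of_mem (hv : {v} ∈ K.faces) : K.fnum 0 = (K.del v).fnum 0 + 1 := by
  have : (K.faces.filter fun s => s.card = 0 + 1) =
      insert {v} ((K.del v).faces.filter fun s => s.card = 0 + 1) := by
    ext s
    simp only [Finset.mem_filter, Finset.mem_insert, mem_del]
    constructor
    · rintro ⟨hs, hcard⟩
      obtain ⟨x, rfl⟩ := Finset.card_eq_one.mp hcard
      grind
    · rintro (rfl | h)
      · simp [hv]
      · exact ⟨h.1.1, h.2⟩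
  rw [fnum, this, Finset.card_insert_of_notMem (by simp [mem_del]), fnum]

theorem fnum_one_eq (v : ℕ) : K.fnum 1 = (K.del v).fnum 1 + (K.nbrs {v}).card := by
  rw [fnum, ← Finset.card_filter_add_card_filter_not (p := fun s => v ∉ s), ← card_cofaces]
  congr 2
  · ext s
    simp [mem_del, and_right_comm]
  · ext s
    simp [and_assoc]

theorem g2_eq_del (hv : {v} ∈ K.faces) : K.g2 = (K.del v).g2 + (K.nbrs {v}).card - 4 := by
  rw [g2, g2, fnum_zero_eq_of_mem hv, fnum_one_eq v]
  push_cast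
  ring

end Basic

namespace Normal3

variable {K : SComplex} {s σ F G : Finset ℕ}

theorem card_le_four (hK : K.Normal3) (hs : s ∈ K.faces) : s.card ≤ 4 := by
  obtain ⟨F, -, hsF, hF⟩ := hK.exists_facet s hs
  exact hF ▸ Finset.card_le_card hsF

theorem isFacet_iff (hK : K.Normal3) : K.IsFacet F ↔ F ∈ K.faces ∧ F.card = 4 := by
  refine ⟨fun ⟨hF, hmax⟩ => ⟨hF, ?_⟩, fun ⟨hF, hF4⟩ => ⟨hF, fun t ht hFt => ?_⟩⟩
  · obtain ⟨G, hG, hFG, hG4⟩ := hK.exists_facet F hF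
    rwa [hmax G hG hFG]
  · exact Finset.eq_of_subset_of_card_le hFt (hF4 ▸ hK.card_le_four ht)

end Normal3

section Chains

variable {K : SComplex} {σ F G : Finset ℕ}

theorem FacetAdjOver.mono {τ : Finset ℕ} (hτ : τ ⊆ σ) (h : K.FacetAdjOver σ F G) :
    K.FacetAdjOver τ F G :=
  ⟨h.1, h.2.1, h.2.2.1, h.2.2.2.1, hτ.trans h.2.2.2.2.1, h.2.2.2.2.2⟩

instance : Std.Symm (K.FacetAdjOver σ) where
  symm F G h := by
    obtain ⟨hF, hG, hF4, hG4, hσ, h3⟩ := h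
    rw [Finset.inter_comm] at hσ h3
    exact ⟨hG, hF, hG4, hF4, hσ, h3⟩

theorem reflTransGen_of_common_triangle {r : Finset ℕ} (hF : F ∈ K.faces) (hG : G ∈ K.faces)
    (hF4 : F.card = 4) (hG4 : G.card = 4) (hr3 : r.card = 3) (hrF : r ⊆ F) (hrG : r ⊆ G)
    (hσF : σ ⊆ F) (hσG : σ ⊆ G) : Relation.ReflTransGen (K.FacetAdjOver σ) F G := by
  obtain rfl | hne := eq_or_ne F G
  · exact .refl
  have hle := Finset.card_le_card (Finset.subset_inter hrF hrG)
  have hlt := card_inter_lt hne (hF4.trans hG4.symm)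
  exact .single ⟨hF, hG, hF4, hG4, Finset.subset_inter hσF hσG, by omega⟩

theorem linkConn_of_facet_chains (hσ : σ.card ≤ 2)
    (hfacet : ∀ s ∈ K.faces, ∃ F ∈ K.faces, s ⊆ F ∧ F.card = 4)
    (hchain : ∀ F ∈ K.faces, ∀ G ∈ K.faces, F.card = 4 → G.card = 4 → σ ⊆ F → σ ⊆ G →
      Relation.ReflTransGen (K.FacetAdjOver σ) F G) : K.LinkConn σ := by
  have within : ∀ F ∈ K.faces, σ ⊆ F → ∀ x ∈ F, ∀ y ∈ F, x ∉ σ → y ∉ σ →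
      (K.lk σ).VertAdj x y := fun F hF hσF x hx y hy hxσ hyσ =>
    vertAdj_lk.mpr ⟨hxσ, hyσ, mem_of_subset hF (by grind) (by simp)⟩
  have along : ∀ F G, Relation.ReflTransGen (K.FacetAdjOver σ) F G → F ∈ K.faces → σ ⊆ F →
      ∀ x ∈ F, ∀ y ∈ G, x ∉ σ → y ∉ σ → Relation.ReflTransGen (K.lk σ).VertAdj x y := by
    intro F G hFG hF hσF x hx
    induction hFG with
    | refl => exact fun y hy hxσ hyσ => .single (within F hF hσF x hx y hy hxσ hyσ)
    | @tail G G' _ hGG' ih =>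
      intro y hy hxσ hyσ
      obtain ⟨-, hG', -, -, hsub, h3⟩ := hGG'
      obtain ⟨z, hz, hzσ⟩ := Finset.exists_mem_notMem_of_card_lt_card
        (by omega : σ.card < (G ∩ G').card)
      have hz' := Finset.mem_inter.mp hz
      exact (ih z hz'.1 hxσ hzσ).tail <|
        within G' hG' (hsub.trans Finset.inter_subset_right) z hz'.2 y hy hzσ hyσ
  intro x hx y hy
  rw [mem_nbrs] at hx hy
  obtain ⟨F, hF, hxF, hF4⟩ := hfacet _ hx.2
  obtain ⟨G, hG, hyG, hG4⟩ := hfacet _ hy.2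
  have hσF := (Finset.subset_insert x σ).trans hxF
  have hσG := (Finset.subset_insert y σ).trans hyG
  exact along F G (hchain F hF G hG hF4 hG4 hσF hσG) hF hσF x (hxF (by simp)) y
    (hyG (by simp)) hx.1 hy.1

theorem Normal3.facet_chain (hK : K.Normal3) (hσ : σ.card ≤ 3) (hF : F ∈ K.faces)
    (hG : G ∈ K.faces) (hF4 : F.card = 4) (hG4 : G.card = 4) (hσF : σ ⊆ F) (hσG : σ ⊆ G) :
    Relation.ReflTransGen (K.FacetAdjOver σ) F G := by
  induction hn : 3 - σ.card generalizing σ F G with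
  | zero =>
    obtain rfl | hne := eq_or_ne F G
    · exact .refl
    refine .single ⟨hF, hG, hF4, hG4, Finset.subset_inter hσF hσG, ?_⟩
    have hge := Finset.card_le_card (Finset.subset_inter hσF hσG)
    have hlt := card_inter_lt hne (hF4.trans hG4.symm)
    omega
  | succ n ih =>
    have extend : ∀ x ∉ σ, ∀ F ∈ K.faces, ∀ G ∈ K.faces, F.card = 4 → G.card = 4 →
        insert x σ ⊆ F → insert x σ ⊆ G → Relation.ReflTransGen (K.FacetAdjOver σ) F G := by
      intro x hx F hF G hG hF4 hG4 hxF hxG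
      have hcard := Finset.card_insert_of_notMem hx
      exact Relation.ReflTransGen.mono (fun _ _ => FacetAdjOver.mono (Finset.subset_insert x σ)) _ _
        (ih (by omega) hF hG hF4 hG4 hxF hxG (by omega))
    obtain ⟨x, hxF, hx⟩ := Finset.exists_mem_notMem_of_card_lt_card (by omega : σ.card < F.card)
    obtain ⟨y, hyG, hy⟩ := Finset.exists_mem_notMem_of_card_lt_card (by omega : σ.card < G.card)
    have hyσG : insert y σ ⊆ G := Finset.insert_subset hyG hσG
    have hpath := hK.linkConn σ (by omega) x
      (mem_nbrs.mpr ⟨hx, mem_of_subset hF (Finset.insert_subset hxF hσF) (by simp)⟩) y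
      (mem_nbrs.mpr ⟨hy, mem_of_subset hG hyσG (by simp)⟩)
    induction hpath generalizing G with
    | refl => exact extend x hx F hF G hG hF4 hG4 (Finset.insert_subset hxF hσF) hyσG
    | @tail y z _ hyz ih' =>
      obtain ⟨hyσ, -, hyz⟩ := vertAdj_lk.mp hyz
      obtain ⟨E, hE, hyzE, hE4⟩ := hK.exists_facet _ hyz
      simp only [Finset.insert_subset_iff] at hyzE
      obtain ⟨hyE, hzE, hσE⟩ := hyzE
      exact (ih' hE hE4 hσE hyE hyσ (Finset.insert_subset hyE hσE)).trans
        (extend z hy E hE G hG hE4 hG4 (Finset.insert_subset hzE hσE) hyσG)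

theorem Normal3.facet_induction (hK : K.Normal3) {P : Finset ℕ → Prop} (hF : F ∈ K.faces)
    (hF4 : F.card = 4) (hPF : P F)
    (hstep : ∀ G ∈ K.faces, ∀ G' ∈ K.faces, G.card = 4 → G'.card = 4 → (G ∩ G').card = 3 →
      P G → P G') : ∀ G ∈ K.faces, G.card = 4 → P G := by
  intro G hG hG4
  have hchain := hK.facet_chain (σ := ∅) (by simp) hF hG hF4 hG4 (by simp) (by simp)
  clear hG hG4
  induction hchain with
  | refl => exact hPF
  | tail _ h ih => exact hstep _ h.1 _ h.2.1 h.2.2.1 h.2.2.2.1 h.2.2.2.2.2 ih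

theorem LinkConn.of_conn (h : (K.lk σ).Conn) : K.LinkConn σ := fun x hx y hy =>
  h.2 x y (singleton_mem_lk.mpr hx) (singleton_mem_lk.mpr hy)

theorem Normal3.conn_lk (hK : K.Normal3) (hσ : σ ∈ K.faces) (hσ2 : σ.card ≤ 2) :
    (K.lk σ).Conn := by
  obtain ⟨F, hF, hσF, hF4⟩ := hK.exists_facet σ hσ
  obtain ⟨z, hzF, hz⟩ := Finset.exists_mem_notMem_of_card_lt_card (by omega : σ.card < F.card)
  have hzσ : insert z σ ∈ K.faces := mem_of_subset hF (Finset.insert_subset hzF hσF) (by simp)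
  exact ⟨⟨{z}, singleton_mem_lk.mpr (mem_nbrs.mpr ⟨hz, hzσ⟩)⟩, fun x y hx hy =>
    hK.linkConn σ hσ2 x (singleton_mem_lk.mp hx) y (singleton_mem_lk.mp hy)⟩

theorem IsNormalPseudomanifold.normal3 (hK : K.IsNormalPseudomanifold 3) : K.Normal3 := by
  obtain ⟨⟨hne, hpure⟩, hstrong, htwo, hconn⟩ := hK
  have hfacet : ∀ s ∈ K.faces, ∃ F ∈ K.faces, s ⊆ F ∧ F.card = 4 := by
    intro s hs
    obtain ⟨F, hsF, hF⟩ := K.faces.exists_le_maximal hs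
    exact ⟨F, hF.1, hsF, hpure F ⟨hF.1, fun t ht hFt => hF.eq_of_le ht hFt⟩⟩
  refine ⟨hne, hfacet, fun r hr hr3 => ?_, fun σ hσ => ?_⟩
  · rw [← card_cofaces, hr3]
    exact htwo r hr hr3
  obtain rfl | hσne := σ.eq_empty_or_nonempty
  · have isFacet : ∀ F ∈ K.faces, F.card = 4 → K.IsFacet F := fun F hF hF4 =>
      ⟨hF, fun t ht hFt => Finset.eq_of_subset_of_card_le hFt <| by
        obtain ⟨G, -, htG, hG4⟩ := hfacet t ht
        rw [hF4, ← hG4]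
        exact Finset.card_le_card htG⟩
    refine linkConn_of_facet_chains (by simp) hfacet fun F hF G hG hF4 hG4 _ _ => ?_
    refine Relation.ReflTransGen.mono (fun A B hAB => ?_) _ _
      (hstrong F G (isFacet F hF hF4) (isFacet G hG hG4))
    obtain ⟨hA, hB, hAB⟩ := hAB
    have hA4 := hpure A hA
    exact ⟨hA.1, hB.1, hA4, hpure B hB, by simp, by omega⟩
  · by_cases hσK : σ ∈ K.faces
    · exact .of_conn (hconn σ hσK hσ)
    · exact fun x hx =>
        absurd (mem_of_subset (mem_nbrs.mp hx).2 (Finset.subset_insert x σ) hσne) hσK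

theorem Normal3.isNormalPseudomanifold (hK : K.Normal3) : K.IsNormalPseudomanifold 3 := by
  refine ⟨⟨hK.nonempty, fun F hF => (hK.isFacet_iff.mp hF).2⟩, fun F G hF hG => ?_,
    fun r hr hr3 => ?_, fun σ hσ hσ2 => hK.conn_lk hσ hσ2⟩
  · rw [hK.isFacet_iff] at hF hG
    refine Relation.ReflTransGen.mono (fun A B hAB => ?_) _ _
      (hK.facet_chain (σ := ∅) (by simp) hF.1 hG.1 hF.2 hG.2 (by simp) (by simp))
    obtain ⟨hA, hB, hA4, hB4, -, h3⟩ := hAB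
    exact ⟨hK.isFacet_iff.mpr ⟨hA, hA4⟩, hK.isFacet_iff.mpr ⟨hB, hB4⟩, by omega⟩
  · rw [← hK.card_nbrs r hr hr3, ← card_cofaces, hr3]

end Chains

section Cone

variable {K : SComplex} {w : ℕ}

theorem Normal3.mem_bdryFaces_del (hK : K.Normal3) {s : Finset ℕ} :
    s ∈ bdryFaces (K.del w).faces 3 ↔ s.Nonempty ∧ w ∉ s ∧ insert w s ∈ K.faces := by
  have card_eq_one_iff : ∀ r ∈ (K.del w).faces, r.card = 3 →
      (((K.del w).faces.filter fun t => t.card = 3 + 1 ∧ r ⊆ t).card = 1 ↔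
        insert w r ∈ K.faces) := by
    intro r hr hr3
    obtain ⟨hrK, hwr⟩ := mem_del.mp hr
    have hcofaces := card_cofaces (K.del w) r
    rw [hr3, nbrs_del hwr] at hcofaces
    have hnbr : w ∈ K.nbrs r ↔ insert w r ∈ K.faces := by simp [mem_nbrs, hwr]
    have htwo := hK.card_nbrs r hrK hr3
    rw [hcofaces, ← hnbr]
    by_cases h : w ∈ K.nbrs r
    · simp [h, Finset.card_erase_of_mem h, htwo]
    · simp [h, htwo]
  simp only [bdryFaces, Finset.mem_filter]
  constructor
  · rintro ⟨hs, r, hr, hsr, hr3, hone⟩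
    exact ⟨nonempty_of_mem hs, (mem_del.mp hs).2, mem_of_subset
      ((card_eq_one_iff r hr hr3).mp hone) (Finset.insert_subset_insert w hsr) (by simp)⟩
  · rintro ⟨hne, hw, hs⟩
    obtain ⟨F, hF, hsF, hF4⟩ := hK.exists_facet _ hs
    obtain ⟨hwF, hsF⟩ := Finset.insert_subset_iff.mp hsF
    have hsr : s ⊆ F.erase w := Finset.subset_erase.mpr ⟨hsF, hw⟩
    have hr : F.erase w ∈ (K.del w).faces :=
      mem_del.mpr ⟨mem_of_subset hF (F.erase_subset w) (hne.mono hsr), F.notMem_erase w⟩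
    have hr3 : (F.erase w).card = 3 := by rw [Finset.card_erase_of_mem hwF, hF4]
    exact ⟨mem_del.mpr ⟨mem_of_subset hF hsF hne, hw⟩, F.erase w, hr, hsr, hr3,
      (card_eq_one_iff _ hr hr3).mpr (by rwa [Finset.insert_erase hwF])⟩

theorem Normal3.faces_eq_cone (hK : K.Normal3) (hw : {w} ∈ K.faces) :
    K.faces = (K.del w).faces ∪ coneFaces w (bdryFaces (K.del w).faces 3) := by
  ext s
  simp only [coneFaces, Finset.mem_union, Finset.mem_image, hK.mem_bdryFaces_del,
    Finset.mem_singleton, mem_del]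
  constructor
  · intro hs
    by_cases hws : w ∈ s
    · obtain h | h := (s.erase w).eq_empty_or_nonempty
      · have := Finset.insert_erase hws
        grind
      · refine .inr (.inl (.inr ⟨s.erase w, ⟨h, s.notMem_erase w, ?_⟩, Finset.insert_erase hws⟩))
        rwa [Finset.insert_erase hws]
    · exact .inl ⟨hs, hws⟩
  · rintro (h | ((h | ⟨t, h, rfl⟩) | rfl))
    · exact h.1
    · exact mem_of_subset h.2.2 (Finset.subset_insert w s) h.1
    · exact h.2.2
    · exact hw

end Cone

/-- The complex whose faces are the nonempty subsets of the members of `𝓕`. -/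
def ofFacets (𝓕 : Finset (Finset ℕ)) : SComplex where
  faces := (𝓕.biUnion Finset.powerset).erase ∅
  not_empty_mem := Finset.notMem_erase _ _
  down_closed s hs t hts ht := by
    simp only [Finset.mem_erase, Finset.mem_biUnion, Finset.mem_powerset] at hs ⊢
    obtain ⟨-, F, hF, hsF⟩ := hs
    exact ⟨ht, F, hF, hts.trans hsF⟩

theorem mem_ofFacets {𝓕 : Finset (Finset ℕ)} {s : Finset ℕ} :
    s ∈ (ofFacets 𝓕).faces ↔ s.Nonempty ∧ ∃ F ∈ 𝓕, s ⊆ F := by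
  simp [ofFacets, Finset.nonempty_iff_ne_empty]

/-- The union of two complexes. -/
def union (K L : SComplex) : SComplex where
  faces := K.faces ∪ L.faces
  not_empty_mem := by simp [K.not_empty_mem, L.not_empty_mem]
  down_closed s hs t hts ht := by
    rw [Finset.mem_union] at hs ⊢
    exact hs.imp (K.down_closed s · t hts ht) (L.down_closed s · t hts ht)

/-- Data for splitting the vertex `w` along a missing triangle `C` of its link: the fresh vertices
`n false`, `n true` replacing `w`, and the colouring `H` of the triangles of the link of `w`
(written as `F.erase w` for a tetrahedron `F ∋ w`) by the side of `C` on which they lie. -/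
structure SplitData (K : SComplex) (w : ℕ) (C : Finset ℕ) (n : Bool → ℕ) (H : Finset ℕ → Bool) :
    Prop where
  normal : K.Normal3
  card_eq : C.card = 3
  notMem : w ∉ C
  missing : C ∉ K.faces
  edge_mem : ∀ e ⊆ C, e.card = 2 → insert w e ∈ K.faces
  injective : n.Injective
  fresh : ∀ i, n i ∉ K.vertexSet
  colour : ∀ F ∈ K.faces, ∀ G ∈ K.faces, F.card = 4 → G.card = 4 → w ∈ F ∩ G →
    (F ∩ G).card = 3 → (H (G.erase w) = H (F.erase w) ↔ ¬ (F ∩ G).erase w ⊆ C)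

/-- The tetrahedron replacing `F` after splitting `w`: if `w ∈ F`, then `w` is exchanged for the new
vertex on the side of `F`. -/
def splitFacet (w : ℕ) (n : Bool → ℕ) (H : Finset ℕ → Bool) (F : Finset ℕ) : Finset ℕ :=
  if w ∈ F then insert (n (H (F.erase w))) (F.erase w) else F

/-- The faces common to the vertex split and its flip: those of the tetrahedra of `K` after
splitting `w`. -/
def splitCore (K : SComplex) (w : ℕ) (n : Bool → ℕ) (H : Finset ℕ → Bool) : SComplex :=
  ofFacets ((K.faces.filter fun F => F.card = 4).image (splitFacet w n H))

/-- The vertex split of `K` at `w` along `C`: an edge expansion that inserts the edge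
`n false n true` with link the boundary of `C`. -/
def split (K : SComplex) (w : ℕ) (C : Finset ℕ) (n : Bool → ℕ) (H : Finset ℕ → Bool) : SComplex :=
  (K.splitCore w n H).union
    (ofFacets ((C.powersetCard 2).image fun e => insert (n false) (insert (n true) e)))

/-- The result of the vertex split followed by the bistellar 2-move that exchanges the new edge for
the triangle `C`. -/
def splitFlip (K : SComplex) (w : ℕ) (C : Finset ℕ) (n : Bool → ℕ) (H : Finset ℕ → Bool) :
    SComplex :=
  (K.splitCore w n H).union (ofFacets (Finset.univ.image fun i => insert (n i) C))

/-- The tetrahedron of `splitFlip` on the side `i` that stands for `F ∋ w`: all tetrahedra on the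
other side are represented by the new tetrahedron over `C`. -/
def sideFacet (w : ℕ) (C : Finset ℕ) (n : Bool → ℕ) (H : Finset ℕ → Bool) (i : Bool)
    (F : Finset ℕ) : Finset ℕ :=
  if H (F.erase w) = i then splitFacet w n H F else insert (n i) C

/-- `τ` lies in a triangle of colour `i` of the link of `w`, i.e. in the closed disc on one side of
`C`. -/
def InDisc (K : SComplex) (w : ℕ) (H : Finset ℕ → Bool) (i : Bool) (τ : Finset ℕ) : Prop :=
  ∃ F ∈ K.faces, F.card = 4 ∧ w ∈ F ∧ τ ⊆ F.erase w ∧ H (F.erase w) = i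

theorem subset_splitFacet_iff {w : ℕ} {n : Bool → ℕ} {H : Finset ℕ → Bool} {τ F : Finset ℕ}
    (hτ : ∀ i, n i ∉ τ) :
    τ ⊆ splitFacet w n H F ↔ τ ⊆ F ∧ w ∉ τ := by
  rw [splitFacet]
  split_ifs with hw
  · rw [Finset.subset_insert_iff_of_notMem (hτ _), Finset.subset_erase]
  · exact (and_iff_left_of_imp fun h hwτ => hw (h hwτ)).symm

theorem exists_avoiding {n : Bool → ℕ} (hn : n.Injective) (s : Finset ℕ) : ∃ τ, (∀ i, n i ∉ τ) ∧
    (s = τ ∨ (∃ i, s = insert (n i) τ) ∨ s = insert (n false) (insert (n true) τ)) := by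
  refine ⟨(s.erase (n false)).erase (n true), by simp, ?_⟩
  have hne : n false ≠ n true := fun h => by simpa using hn h
  by_cases h₀ : n false ∈ s <;> by_cases h₁ : n true ∈ s
  · refine .inr (.inr ?_)
    rw [Finset.insert_erase (by simp [h₁, hne.symm]), Finset.insert_erase h₀]
  · refine .inr (.inl ⟨false, ?_⟩)
    rw [Finset.erase_eq_of_notMem (a := n true) (by simp [h₁]), Finset.insert_erase h₀]
  · refine .inr (.inl ⟨true, ?_⟩)
    rw [Finset.erase_eq_of_notMem h₀, Finset.insert_erase h₁]
  · rw [Finset.erase_eq_of_notMem h₀, Finset.erase_eq_of_notMem h₁]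
    exact .inl rfl

namespace InDisc

variable {K : SComplex} {w : ℕ} {H : Finset ℕ → Bool} {i : Bool} {τ ρ : Finset ℕ}

theorem mono (h : K.InDisc w H i τ) (hρ : ρ ⊆ τ) : K.InDisc w H i ρ := by
  obtain ⟨F, hF, hF4, hw, hτ, hi⟩ := h
  exact ⟨F, hF, hF4, hw, hρ.trans hτ, hi⟩

theorem notMem (h : K.InDisc w H i τ) : w ∉ τ := by
  obtain ⟨F, -, -, -, hτ, -⟩ := h
  exact (Finset.subset_erase.mp hτ).2

theorem insert_mem (h : K.InDisc w H i τ) : insert w τ ∈ K.faces := by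
  obtain ⟨F, hF, -, hw, hτ, -⟩ := h
  exact mem_of_subset hF (Finset.insert_subset hw (Finset.subset_erase.mp hτ).1) (by simp)

theorem mem (h : K.InDisc w H i τ) (hτ : τ.Nonempty) : τ ∈ K.faces :=
  mem_of_subset h.insert_mem (Finset.subset_insert w τ) hτ

end InDisc

theorem inDisc_iff_of_card {K : SComplex} {w : ℕ} {H : Finset ℕ → Bool} {i : Bool} {T : Finset ℕ}
    (hT : T.card = 3) : K.InDisc w H i T ↔ w ∉ T ∧ insert w T ∈ K.faces ∧ H T = i := by
  constructor
  · intro h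
    refine ⟨h.notMem, h.insert_mem, ?_⟩
    obtain ⟨F, -, hF4, hw, hTF, hi⟩ := h
    rwa [Finset.eq_of_subset_of_card_le hTF (by rw [Finset.card_erase_of_mem hw]; omega)]
  · rintro ⟨hw, hF, hi⟩
    have herase : (insert w T).erase w = T := Finset.erase_insert hw
    exact ⟨_, hF, by rw [Finset.card_insert_of_notMem hw, hT], by simp, herase.ge, by rwa [herase]⟩

theorem Normal3.exists_inDisc {K : SComplex} (hK : K.Normal3) {w : ℕ} {τ : Finset ℕ} (hw : w ∉ τ)
    (hτ : insert w τ ∈ K.faces) (H : Finset ℕ → Bool) : ∃ i, K.InDisc w H i τ := by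
  obtain ⟨F, hF, hsub, hF4⟩ := hK.exists_facet _ hτ
  rw [Finset.insert_subset_iff] at hsub
  exact ⟨_, F, hF, hF4, hsub.1, Finset.subset_erase.mpr ⟨hsub.2, hw⟩, rfl⟩

namespace SplitData

variable {K : SComplex} {w : ℕ} {C : Finset ℕ} {n : Bool → ℕ} {H : Finset ℕ → Bool}
  {s τ σ A B F G : Finset ℕ} {i j : Bool}

theorem fresh_notMem (D : SplitData K w C n H) (hs : s ∈ K.faces) (i : Bool) : n i ∉ s :=
  fun h => D.fresh i (mem_vertexSet.mpr (mem_of_subset hs (by simpa) (by simp)))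

theorem exists_edge (D : SplitData K w C n H) (hτ : τ ⊂ C) : ∃ e, τ ⊆ e ∧ e ⊆ C ∧ e.card = 2 :=
  Finset.exists_subsuperset_card_eq hτ.subset
    (Nat.le_of_lt_succ (by simpa [D.card_eq] using Finset.card_lt_card hτ))
    (by rw [D.card_eq]; omega)

theorem proper_mem (D : SplitData K w C n H) (hτ : τ ⊂ C) : insert w τ ∈ K.faces := by
  obtain ⟨e, hτe, heC, he⟩ := D.exists_edge hτ
  exact mem_of_subset (D.edge_mem e heC he) (Finset.insert_subset_insert w hτe) (by simp)

theorem fresh_notMem_missing (D : SplitData K w C n H) (i : Bool) : n i ∉ C := by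
  intro h
  have hss : {n i} ⊂ C := by
    refine ⟨by simpa, fun hsub => ?_⟩
    have := Finset.card_le_card hsub
    simp [D.card_eq] at this
  exact D.fresh_notMem (D.proper_mem hss) i (by simp)

theorem subset_of_inDisc (D : SplitData K w C n H) (hi : K.InDisc w H i τ)
    (hj : K.InDisc w H j τ) (hij : i ≠ j) : τ ⊆ C := by
  intro x hx
  by_contra hxC
  obtain ⟨F, hF, hF4, hwF, hτF, rfl⟩ := hi
  obtain ⟨G, hG, hG4, hwG, hτG, rfl⟩ := hj
  have hxF := Finset.mem_erase.mp (hτF hx)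
  have hxG := Finset.mem_erase.mp (hτG hx)
  -- The triangles around `x` are linked by a chain, and no step of it crosses `C`.
  have hchain := D.normal.facet_chain (σ := {w, x}) (Finset.card_le_two.trans (by simp)) hF hG
    hF4 hG4 (by simp [Finset.insert_subset_iff, hwF, hxF]) (by simp [Finset.insert_subset_iff, *])
  refine hij ?_
  clear hG hG4 hwG hτG hxG hij
  induction hchain with
  | refl => rfl
  | @tail A B _ hAB ih =>
    obtain ⟨hA, hB, hA4, hB4, hsub, h3⟩ := hAB
    simp only [Finset.insert_subset_iff, Finset.singleton_subset_iff] at hsub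
    rw [ih, (D.colour A hA B hB hA4 hB4 hsub.1 h3).mpr fun h =>
      hxC (h (Finset.mem_erase.mpr ⟨hxF.1, hsub.2⟩))]

theorem colour_insert_nbr_iff (D : SplitData K w C n H) {e : Finset ℕ} {p q : ℕ}
    (hwe : w ∉ e) (he2 : e.card = 2) (hpq : p ≠ q) (hp : p ∈ K.nbrs (insert w e))
    (hq : q ∈ K.nbrs (insert w e)) : H (insert q e) = H (insert p e) ↔ ¬ e ⊆ C := by
  have hwe3 : (insert w e).card = 3 := by rw [Finset.card_insert_of_notMem hwe, he2]
  obtain ⟨hp, hpK⟩ := mem_nbrs.mp hp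
  obtain ⟨hq, hqK⟩ := mem_nbrs.mp hq
  have herase : ∀ z ∉ insert w e, (insert z (insert w e)).erase w = insert z e := fun z hz => by
    rw [Finset.insert_comm, Finset.erase_insert (by grind)]
  have hinter : insert p (insert w e) ∩ insert q (insert w e) = insert w e := by grind
  have := D.colour _ hpK _ hqK (by rw [Finset.card_insert_of_notMem hp, hwe3])
    (by rw [Finset.card_insert_of_notMem hq, hwe3]) (by simp) (by rw [hinter, hwe3])
  rwa [herase p hp, herase q hq, hinter, Finset.erase_insert hwe] at this

theorem inDisc_of_ssubset (D : SplitData K w C n H) (hτ : τ ⊂ C) (i : Bool) :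
    K.InDisc w H i τ := by
  obtain ⟨e, hτe, heC, he⟩ := D.exists_edge hτ
  have hwe : w ∉ e := fun h => D.notMem (heC h)
  have hr3 : (insert w e).card = 3 := by rw [Finset.card_insert_of_notMem hwe, he]
  obtain ⟨p, q, hpq, hnbrs⟩ := Finset.card_eq_two.mp
    (D.normal.card_nbrs _ (D.edge_mem e heC he) hr3)
  have hp : p ∈ K.nbrs (insert w e) := hnbrs ▸ by simp
  have hq : q ∈ K.nbrs (insert w e) := hnbrs ▸ by simp
  have hne : H (insert q e) ≠ H (insert p e) := fun h =>
    (D.colour_insert_nbr_iff hwe he hpq hp hq).mp h heC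
  have disc_of_nbr : ∀ z ∈ K.nbrs (insert w e), H (insert z e) = i → K.InDisc w H i τ := by
    intro z hz hi
    obtain ⟨hz, hzK⟩ := mem_nbrs.mp hz
    rw [Finset.mem_insert, not_or] at hz
    refine InDisc.mono ?_ (hτe.trans (Finset.subset_insert z e))
    refine (inDisc_iff_of_card (by rw [Finset.card_insert_of_notMem hz.2, he])).mpr
      ⟨by simp [hwe, Ne.symm hz.1], ?_, hi⟩
    rwa [Finset.insert_comm]
  obtain hi | hi := eq_or_ne (H (insert p e)) i
  · exact disc_of_nbr p hp hi
  · exact disc_of_nbr q hq (by rw [Bool.eq_not.mpr hne, Bool.eq_not.mpr hi, Bool.not_not])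

theorem mem_splitCore_of_avoids (D : SplitData K w C n H) (hs : ∀ i, n i ∉ s) :
    s ∈ (K.splitCore w n H).faces ↔ s ∈ K.faces ∧ w ∉ s := by
  simp only [splitCore, mem_ofFacets, Finset.mem_image, Finset.mem_filter, splitFacet]
  constructor
  · rintro ⟨hne, -, ⟨F, ⟨hF, -⟩, rfl⟩, hsF⟩
    split_ifs at hsF with hw
    · rw [Finset.subset_insert_iff_of_notMem (hs _), Finset.subset_erase] at hsF
      exact ⟨mem_of_subset hF hsF.1 hne, hsF.2⟩
    · exact ⟨mem_of_subset hF hsF hne, fun h => hw (hsF h)⟩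
  · rintro ⟨hsK, hw⟩
    obtain ⟨F, hF, hsF, hF4⟩ := D.normal.exists_facet s hsK
    refine ⟨nonempty_of_mem hsK, _, ⟨F, ⟨hF, hF4⟩, rfl⟩, ?_⟩
    split_ifs
    · exact (Finset.subset_erase.mpr ⟨hsF, hw⟩).trans (Finset.subset_insert _ _)
    · exact hsF

theorem insert_mem_splitCore (D : SplitData K w C n H) (hτ : ∀ i, n i ∉ τ) :
    insert (n i) τ ∈ (K.splitCore w n H).faces ↔ K.InDisc w H i τ := by
  simp only [splitCore, mem_ofFacets, Finset.mem_image, Finset.mem_filter, splitFacet]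
  constructor
  · rintro ⟨-, -, ⟨F, ⟨hF, hF4⟩, rfl⟩, hsub⟩
    obtain ⟨hi, hτF⟩ := Finset.insert_subset_iff.mp hsub
    split_ifs at hi hτF with hw
    · rw [Finset.subset_insert_iff_of_notMem (hτ _)] at hτF
      obtain h | h := Finset.mem_insert.mp hi
      · exact ⟨F, hF, hF4, hw, hτF, (D.injective h).symm⟩
      · exact absurd (Finset.mem_of_mem_erase h) (D.fresh_notMem hF i)
    · exact absurd hi (D.fresh_notMem hF i)
  · rintro ⟨F, hF, hF4, hw, hτF, rfl⟩
    exact ⟨by simp, _, ⟨F, ⟨hF, hF4⟩, rfl⟩, by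
      rw [if_pos hw]
      exact Finset.insert_subset_insert _ hτF⟩

theorem eq_of_fresh_mem_splitCore (D : SplitData K w C n H)
    (hs : s ∈ (K.splitCore w n H).faces) (hi : n i ∈ s) (hj : n j ∈ s) : i = j := by
  simp only [splitCore, mem_ofFacets, Finset.mem_image, Finset.mem_filter, splitFacet] at hs
  obtain ⟨-, -, ⟨F, ⟨hF, -⟩, rfl⟩, hsF⟩ := hs
  have hinner : ∀ k, n k ∈ s → k = H (F.erase w) := by
    intro k hk
    have hkF := hsF hk
    have := D.fresh_notMem hF k
    split_ifs at hkF
    · exact D.injective ((Finset.mem_insert.mp hkF).resolve_right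
        fun h => this (Finset.mem_of_mem_erase h))
    · exact absurd hkF this
  rw [hinner i hi, hinner j hj]

theorem mem_splitCore_of_ssubset (D : SplitData K w C n H) (hτ : τ ⊂ C) (hne : τ.Nonempty) :
    τ ∈ (K.splitCore w n H).faces :=
  (D.mem_splitCore_of_avoids fun j hj => D.fresh_notMem_missing j (hτ.subset hj)).mpr
    ⟨(D.inDisc_of_ssubset hτ false).mem hne, fun hw => D.notMem (hτ.subset hw)⟩

theorem insert_mem_splitCore_of_ssubset (D : SplitData K w C n H) (hτ : τ ⊂ C) (i : Bool) :
    insert (n i) τ ∈ (K.splitCore w n H).faces :=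
  (D.insert_mem_splitCore fun j hj => D.fresh_notMem_missing j (hτ.subset hj)).mpr
    (D.inDisc_of_ssubset hτ i)

theorem mem_splitFlip (D : SplitData K w C n H) :
    s ∈ (K.splitFlip w C n H).faces ↔
      s ∈ (K.splitCore w n H).faces ∨ s = C ∨ ∃ i, s = insert (n i) C := by
  simp only [splitFlip, union, Finset.mem_union, mem_ofFacets, Finset.mem_image, Finset.mem_univ,
    true_and]
  constructor
  · rintro (hs | ⟨hne, -, ⟨i, rfl⟩, hsub⟩)
    · exact .inl hs
    by_cases hi : n i ∈ s
    · rw [← Finset.insert_erase hi] at hsub ⊢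
      rw [Finset.insert_subset_insert_iff (s.notMem_erase _)] at hsub
      obtain h | h := hsub.eq_or_ssubset
      · exact .inr (.inr ⟨i, by rw [h]⟩)
      · exact .inl (D.insert_mem_splitCore_of_ssubset h i)
    · rw [Finset.subset_insert_iff_of_notMem hi] at hsub
      obtain h | h := hsub.eq_or_ssubset
      · exact .inr (.inl h)
      · exact .inl (D.mem_splitCore_of_ssubset h hne)
  · rintro (hs | rfl | ⟨i, rfl⟩)
    · exact .inl hs
    · exact .inr ⟨Finset.card_pos.mp (by rw [D.card_eq]; omega), _, ⟨true, rfl⟩,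
        Finset.subset_insert _ _⟩
    · exact .inr ⟨by simp, _, ⟨i, rfl⟩, subset_rfl⟩

theorem mem_split (D : SplitData K w C n H) :
    s ∈ (K.split w C n H).faces ↔ s ∈ (K.splitCore w n H).faces ∨
      ∃ τ ⊂ C, s = insert (n false) (insert (n true) τ) := by
  simp only [split, union, Finset.mem_union, mem_ofFacets, Finset.mem_image,
    Finset.mem_powersetCard]
  constructor
  · rintro (hs | ⟨hne, -, ⟨e, ⟨heC, he⟩, rfl⟩, hsub⟩)
    · exact .inl hs
    have heC' : e ⊂ C := heC.ssubset_of_ne fun h => by simp [h, D.card_eq] at he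
    obtain ⟨τ, hτ, hs⟩ := exists_avoiding D.injective s
    have hτs : τ ⊆ s := by obtain rfl | ⟨i, rfl⟩ | rfl := hs <;> grind
    have hτC : τ ⊂ C := by
      have := hτs.trans hsub
      rw [Finset.subset_insert_iff_of_notMem (hτ _), Finset.subset_insert_iff_of_notMem (hτ _)]
        at this
      exact this.trans_ssubset heC'
    obtain rfl | ⟨i, rfl⟩ | rfl := hs
    · exact .inl (D.mem_splitCore_of_ssubset hτC hne)
    · exact .inl (D.insert_mem_splitCore_of_ssubset hτC i)
    · exact .inr ⟨τ, hτC, rfl⟩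
  · rintro (hs | ⟨τ, hτ, rfl⟩)
    · exact .inl hs
    · obtain ⟨e, hτe, heC, he⟩ := D.exists_edge hτ
      exact .inr ⟨by simp, _, ⟨e, ⟨heC, he⟩, rfl⟩,
        Finset.insert_subset_insert _ (Finset.insert_subset_insert _ hτe)⟩

theorem mem_splitFlip_of_avoids (D : SplitData K w C n H) (hs : ∀ i, n i ∉ s) :
    s ∈ (K.splitFlip w C n H).faces ↔ s ∈ K.faces ∧ w ∉ s ∨ s = C := by
  rw [D.mem_splitFlip, D.mem_splitCore_of_avoids hs]
  refine or_congr_right (or_iff_left ?_)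
  rintro ⟨i, rfl⟩
  exact hs i (by simp)

theorem insert_mem_splitFlip (D : SplitData K w C n H) (hτ : ∀ i, n i ∉ τ) :
    insert (n i) τ ∈ (K.splitFlip w C n H).faces ↔ K.InDisc w H i τ ∨ τ = C := by
  rw [D.mem_splitFlip, D.insert_mem_splitCore hτ]
  refine or_congr_right ⟨?_, fun h => .inr ⟨i, by rw [h]⟩⟩
  rintro (h | ⟨j, h⟩)
  · exact absurd (h ▸ Finset.mem_insert_self _ _) (D.fresh_notMem_missing i)
  · have hj : n j = n i := (Finset.mem_insert.mp (h ▸ Finset.mem_insert_self (n j) C :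
      n j ∈ insert (n i) τ)).resolve_right (hτ j)
    rw [← Finset.erase_insert (hτ i), h, ← hj, Finset.erase_insert (D.fresh_notMem_missing j)]

theorem eq_of_fresh_mem_splitFlip (D : SplitData K w C n H)
    (hs : s ∈ (K.splitFlip w C n H).faces) (hi : n i ∈ s) (hj : n j ∈ s) : i = j := by
  obtain hs | rfl | ⟨k, rfl⟩ := D.mem_splitFlip.mp hs
  · exact D.eq_of_fresh_mem_splitCore hs hi hj
  · exact absurd hi (D.fresh_notMem_missing i)
  · have h : ∀ l, n l ∈ insert (n k) C → l = k := fun l hl =>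
      D.injective ((Finset.mem_insert.mp hl).resolve_right (D.fresh_notMem_missing l))
    rw [h i hi, h j hj]

theorem splitFlip_cases (D : SplitData K w C n H) (hA : A ∈ (K.splitFlip w C n H).faces)
    (hs : s ⊆ A) : ∃ τ, (∀ i, n i ∉ τ) ∧ (s = τ ∨ ∃ i, s = insert (n i) τ) := by
  obtain ⟨τ, hτ, h | h | rfl⟩ := exists_avoiding D.injective s
  · exact ⟨τ, hτ, .inl h⟩
  · exact ⟨τ, hτ, .inr h⟩
  · cases D.eq_of_fresh_mem_splitFlip hA (i := false) (j := true) (hs (by simp)) (hs (by simp))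

theorem card_splitFacet (D : SplitData K w C n H) (hF : F ∈ K.faces) :
    (splitFacet w n H F).card = F.card := by
  rw [splitFacet]
  split_ifs with hw
  · rw [Finset.card_insert_of_notMem fun h => D.fresh_notMem hF _ (Finset.mem_of_mem_erase h),
      Finset.card_erase_add_one hw]
  · rfl

theorem splitFacet_mem (D : SplitData K w C n H) (hF : F ∈ K.faces) (hF4 : F.card = 4) :
    splitFacet w n H F ∈ (K.splitFlip w C n H).faces :=
  D.mem_splitFlip.mpr <| .inl <| mem_ofFacets.mpr
    ⟨Finset.card_pos.mp (by rw [D.card_splitFacet hF]; omega), _,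
      Finset.mem_image_of_mem _ (by simp [hF, hF4]), subset_rfl⟩

theorem cap_mem (D : SplitData K w C n H) (i : Bool) :
    insert (n i) C ∈ (K.splitFlip w C n H).faces := D.mem_splitFlip.mpr (.inr (.inr ⟨i, rfl⟩))

theorem card_cap (D : SplitData K w C n H) (i : Bool) : (insert (n i) C).card = 4 := by
  rw [Finset.card_insert_of_notMem (D.fresh_notMem_missing i), D.card_eq]

theorem exists_facet_splitFlip (D : SplitData K w C n H)
    (hs : s ∈ (K.splitFlip w C n H).faces) : ∃ X, s ⊆ X ∧
      ((∃ F ∈ K.faces, F.card = 4 ∧ X = splitFacet w n H F) ∨ ∃ i, X = insert (n i) C) := by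
  obtain hs | rfl | h := D.mem_splitFlip.mp hs
  · simp only [splitCore, mem_ofFacets, Finset.mem_image, Finset.mem_filter] at hs
    obtain ⟨-, X, ⟨F, ⟨hF, hF4⟩, rfl⟩, hsX⟩ := hs
    exact ⟨_, hsX, .inl ⟨F, hF, hF4, rfl⟩⟩
  · exact ⟨_, Finset.subset_insert (n true) _, .inr ⟨true, rfl⟩⟩
  · exact ⟨s, subset_rfl, .inr h⟩

theorem exists_tetrahedron_splitFlip (D : SplitData K w C n H)
    (hs : s ∈ (K.splitFlip w C n H).faces) :
    ∃ X ∈ (K.splitFlip w C n H).faces, s ⊆ X ∧ X.card = 4 := by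
  obtain ⟨-, hsX, ⟨F, hF, hF4, rfl⟩ | ⟨i, rfl⟩⟩ := D.exists_facet_splitFlip hs
  · exact ⟨_, D.splitFacet_mem hF hF4, hsX, (D.card_splitFacet hF).trans hF4⟩
  · exact ⟨_, D.cap_mem i, hsX, D.card_cap i⟩

theorem tetrahedron_splitFlip_cases (D : SplitData K w C n H)
    (hs : s ∈ (K.splitFlip w C n H).faces) (hs4 : s.card = 4) :
    (∃ F ∈ K.faces, F.card = 4 ∧ s = splitFacet w n H F) ∨ ∃ i, s = insert (n i) C := by
  obtain ⟨X, hsX, hX⟩ := D.exists_facet_splitFlip hs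
  have hX4 : X.card = 4 := by
    obtain ⟨F, hF, hF4, rfl⟩ | ⟨i, rfl⟩ := hX
    · rw [D.card_splitFacet hF, hF4]
    · exact D.card_cap i
  rwa [Finset.eq_of_subset_of_card_le hsX (by omega)]

theorem empty_ssubset (D : SplitData K w C n H) : ∅ ⊂ C :=
  Finset.empty_ssubset.mpr (Finset.card_pos.mp (by rw [D.card_eq]; omega))

theorem vertex_mem (D : SplitData K w C n H) : {w} ∈ K.faces := D.proper_mem D.empty_ssubset

theorem fresh_ne (D : SplitData K w C n H) (i : Bool) : n i ≠ w := fun h =>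
  D.fresh_notMem D.vertex_mem i (Finset.mem_singleton.mpr h)

theorem nbrs_splitFlip_missing (D : SplitData K w C n H) :
    (K.splitFlip w C n H).nbrs C = Finset.univ.image n := by
  ext z
  simp only [mem_nbrs, Finset.mem_image, Finset.mem_univ, true_and]
  constructor
  · rintro ⟨hz, hmem⟩
    by_contra! hzn
    have havoid : ∀ i, n i ∉ insert z C := fun i => by
      simp [hzn i, D.fresh_notMem_missing i]
    obtain ⟨h, -⟩ | h := (D.mem_splitFlip_of_avoids havoid).mp hmem
    · exact D.missing (mem_of_subset h (Finset.subset_insert z C)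
        (Finset.card_pos.mp (by rw [D.card_eq]; omega)))
    · exact hz (Finset.insert_eq_self.mp h)
  · rintro ⟨i, rfl⟩
    exact ⟨D.fresh_notMem_missing i, D.cap_mem i⟩

theorem nbrs_splitFlip_of_avoids (D : SplitData K w C n H) {r : Finset ℕ} (hr : ∀ i, n i ∉ r)
    (hr3 : r.card = 3) (hrC : r ≠ C) (hw : w ∉ r) : (K.splitFlip w C n H).nbrs r =
      (K.nbrs r).image fun z => if z = w then n (H r) else z := by
  ext z
  simp only [Finset.mem_image, mem_nbrs]
  by_cases hz : ∃ i, n i = z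
  · obtain ⟨i, rfl⟩ := hz
    rw [D.insert_mem_splitFlip hr, inDisc_iff_of_card hr3, or_iff_left hrC]
    constructor
    · rintro ⟨-, hw, hK, rfl⟩
      exact ⟨w, ⟨hw, hK⟩, if_pos rfl⟩
    · rintro ⟨y, ⟨-, hK⟩, hyn⟩
      split_ifs at hyn with hyw
      · exact ⟨hr i, hw, hyw ▸ hK, D.injective hyn⟩
      · exact absurd (hyn ▸ Finset.mem_insert_self y r) (D.fresh_notMem hK i)
  · push Not at hz
    rw [D.mem_splitFlip_of_avoids (by simp [hz, hr])]
    constructor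
    · rintro ⟨hzr, ⟨hK, hwz⟩ | h⟩
      · exact ⟨z, ⟨hzr, hK⟩, if_neg fun h => hwz (by simp [h])⟩
      · have := Finset.card_insert_of_notMem hzr
        rw [h, D.card_eq] at this
        omega
    · rintro ⟨y, ⟨hy, hK⟩, hyz⟩
      split_ifs at hyz with hyw
      · exact absurd hyz (hz _)
      · subst hyz
        exact ⟨hy, .inl ⟨hK, by simp [hw, Ne.symm hyw]⟩⟩

theorem card_nbrs_splitFlip_of_avoids (D : SplitData K w C n H) {r : Finset ℕ}
    (hr : ∀ i, n i ∉ r) (hr3 : r.card = 3) (hmem : r ∈ (K.splitFlip w C n H).faces) :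
    ((K.splitFlip w C n H).nbrs r).card = 2 := by
  obtain rfl | hrC := eq_or_ne r C
  · rw [D.nbrs_splitFlip_missing, Finset.card_image_of_injective _ D.injective]
    rfl
  obtain ⟨hrK, hw⟩ := ((D.mem_splitFlip_of_avoids hr).mp hmem).resolve_right hrC
  rw [D.nbrs_splitFlip_of_avoids hr hr3 hrC hw, Finset.card_image_of_injOn,
    D.normal.card_nbrs r hrK hr3]
  intro x hx y hy hxy
  have hfresh : ∀ z ∈ K.nbrs r, z ≠ n (H r) := fun z hz h =>
    D.fresh_notMem (mem_nbrs.mp hz).2 (H r) (by simp [← h])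
  have hx := hfresh x hx
  have hy := hfresh y hy
  grind

theorem mem_nbrs_splitFlip_insert (D : SplitData K w C n H) {e : Finset ℕ} {z : ℕ}
    (he : ∀ i, n i ∉ e) (he2 : e.card = 2) (hwe : w ∉ e) :
    z ∈ (K.splitFlip w C n H).nbrs (insert (n i) e) ↔
      z ∈ K.nbrs (insert w e) ∧ H (insert z e) = i ∨ z ∉ e ∧ insert z e = C := by
  rw [mem_nbrs, Finset.insert_comm, Finset.mem_insert, not_or]
  by_cases hz : ∃ j, n j = z
  · obtain ⟨j, rfl⟩ := hz
    refine iff_of_false ?_ ?_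
    · rintro ⟨⟨hne, -⟩, hmem⟩
      exact hne (congrArg n (D.eq_of_fresh_mem_splitFlip hmem (by simp) (by simp)))
    · rintro (⟨h, -⟩ | ⟨-, h⟩)
      · exact D.fresh_notMem (mem_nbrs.mp h).2 j (by simp)
      · exact D.fresh_notMem_missing j (by simp [← h])
  · push Not at hz
    by_cases hze : z ∈ e
    · simp [hze, mem_nbrs]
    rw [D.insert_mem_splitFlip (by simp [hz, he]),
      inDisc_iff_of_card (by rw [Finset.card_insert_of_notMem hze, he2])]
    simp only [mem_nbrs, Finset.mem_insert, hze, hwe, (hz i).symm, not_false_eq_true, or_false,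
      true_and, Finset.insert_comm w z, and_assoc, eq_comm (a := w)]

theorem card_nbrs_splitFlip_insert (D : SplitData K w C n H) {e : Finset ℕ}
    (he : ∀ i, n i ∉ e) (he2 : e.card = 2) (hi : K.InDisc w H i e) :
    ((K.splitFlip w C n H).nbrs (insert (n i) e)).card = 2 := by
  have hwe := hi.notMem
  obtain ⟨F, hF, hF4, hwF, heF, hcol⟩ := hi
  obtain ⟨p, hpe, hpF⟩ := Finset.exists_eq_insert_iff.mpr
    ⟨heF, by rw [he2, Finset.card_erase_of_mem hwF, hF4]⟩
  have hp : p ∈ K.nbrs (insert w e) := by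
    rw [mem_nbrs, Finset.insert_comm, hpF, Finset.insert_erase hwF]
    exact ⟨by grind, hF⟩
  rw [← hpF] at hcol
  have hpC : insert p e ≠ C := fun h =>
    D.missing (h ▸ mem_of_subset hF (hpF ▸ F.erase_subset w) (by simp))
  obtain ⟨q, hpq, hnbrs⟩ := exists_eq_pair_of_mem hp <| D.normal.card_nbrs _
    (mem_of_subset (mem_nbrs.mp hp).2 (Finset.subset_insert p _) (by simp))
    (by rw [Finset.card_insert_of_notMem hwe, he2])
  have hq := D.colour_insert_nbr_iff hwe he2 hpq hp (hnbrs ▸ by simp)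
  have hmem : ∀ z, z ∈ K.nbrs (insert w e) ↔ z = p ∨ z = q := by simp [hnbrs]
  by_cases heC : e ⊆ C
  · obtain ⟨c, hc, rfl⟩ := Finset.exists_eq_insert_iff.mpr ⟨heC, by rw [he2, D.card_eq]⟩
    refine Finset.card_eq_two.mpr ⟨p, c, fun h => hpC (by rw [h]), ?_⟩
    ext z
    rw [D.mem_nbrs_splitFlip_insert he he2 hwe, hmem, Finset.mem_insert, Finset.mem_singleton]
    have hinj : z ∉ e ∧ insert z e = insert c e ↔ z = c :=
      ⟨fun h => (Finset.insert_inj h.1).mp h.2, by rintro rfl; exact ⟨hc, rfl⟩⟩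
    have hqi : H (insert q e) ≠ i := fun h => hq.mp (h.trans hcol.symm) heC
    rw [hinj]
    refine or_congr_left ⟨?_, fun h => ⟨.inl h, h ▸ hcol⟩⟩
    rintro ⟨rfl | rfl, h⟩
    · rfl
    · exact absurd h hqi
  · refine Finset.card_eq_two.mpr ⟨p, q, hpq, ?_⟩
    ext z
    rw [D.mem_nbrs_splitFlip_insert he he2 hwe, hmem, Finset.mem_insert, Finset.mem_singleton]
    have hqi : H (insert q e) = i := (hq.mpr heC).trans hcol
    have hcap : ¬ (z ∉ e ∧ insert z e = C) := fun h => heC (h.2 ▸ Finset.subset_insert z e)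
    rw [or_iff_left hcap, and_iff_left_iff_imp]
    rintro (rfl | rfl) <;> assumption

theorem card_nbrs_splitFlip (D : SplitData K w C n H) {r : Finset ℕ}
    (hr : r ∈ (K.splitFlip w C n H).faces) (hr3 : r.card = 3) :
    ((K.splitFlip w C n H).nbrs r).card = 2 := by
  obtain ⟨e, he, rfl | ⟨i, rfl⟩⟩ := D.splitFlip_cases hr subset_rfl
  · exact D.card_nbrs_splitFlip_of_avoids he hr3 hr
  · rw [Finset.card_insert_of_notMem (he i)] at hr3
    refine D.card_nbrs_splitFlip_insert he (by omega) ?_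
    refine ((D.insert_mem_splitFlip he).mp hr).resolve_right fun h => ?_
    rw [h, D.card_eq] at hr3
    omega

theorem splitFacet_chain_same (D : SplitData K w C n H) (hFG : K.FacetAdjOver {w} F G)
    (hcol : H (G.erase w) = H (F.erase w)) (hσ : σ ⊆ insert (n (H (F.erase w))) ((F ∩ G).erase w)) :
    Relation.ReflTransGen ((K.splitFlip w C n H).FacetAdjOver σ) (splitFacet w n H F)
      (splitFacet w n H G) := by
  obtain ⟨hF, hG, hF4, hG4, hw, h3⟩ := hFG
  rw [Finset.singleton_subset_iff] at hw
  obtain ⟨hwF, hwG⟩ := Finset.mem_inter.mp hw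
  have hsubF : insert (n (H (F.erase w))) ((F ∩ G).erase w) ⊆ splitFacet w n H F := by
    rw [splitFacet, if_pos hwF]
    exact Finset.insert_subset_insert _ (Finset.erase_subset_erase w Finset.inter_subset_left)
  have hsubG : insert (n (H (F.erase w))) ((F ∩ G).erase w) ⊆ splitFacet w n H G := by
    rw [splitFacet, if_pos hwG, hcol]
    exact Finset.insert_subset_insert _ (Finset.erase_subset_erase w Finset.inter_subset_right)
  refine reflTransGen_of_common_triangle (D.splitFacet_mem hF hF4) (D.splitFacet_mem hG hG4)
    (by rw [D.card_splitFacet hF, hF4]) (by rw [D.card_splitFacet hG, hG4]) ?_ hsubF hsubG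
    (hσ.trans hsubF) (hσ.trans hsubG)
  rw [Finset.card_insert_of_notMem, Finset.card_erase_of_mem hw, h3]
  exact fun h => D.fresh_notMem hF _ (Finset.mem_inter.mp (Finset.mem_of_mem_erase h)).1

theorem splitFacet_chain_cap (D : SplitData K w C n H) {e : Finset ℕ} (hF : F ∈ K.faces)
    (hF4 : F.card = 4) (hw : w ∈ F) (heF : e ⊆ F.erase w) (heC : e ⊆ C) (he2 : e.card = 2)
    (hcol : H (F.erase w) = i) (hσ : σ ⊆ insert (n i) e) :
    Relation.ReflTransGen ((K.splitFlip w C n H).FacetAdjOver σ) (splitFacet w n H F)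
      (insert (n i) C) := by
  have hsubF : insert (n i) e ⊆ splitFacet w n H F := by
    rw [splitFacet, if_pos hw, hcol]
    exact Finset.insert_subset_insert _ heF
  have hsubC : insert (n i) e ⊆ insert (n i) C := Finset.insert_subset_insert _ heC
  refine reflTransGen_of_common_triangle (D.splitFacet_mem hF hF4) (D.cap_mem i)
    (by rw [D.card_splitFacet hF, hF4]) (D.card_cap i) ?_ hsubF hsubC
    (hσ.trans hsubF) (hσ.trans hsubC)
  rw [Finset.card_insert_of_notMem fun h => D.fresh_notMem_missing i (heC h), he2]

theorem splitFacet_chain (D : SplitData K w C n H) (hσ : ∀ i, n i ∉ σ) (hwσ : w ∉ σ)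
    (hFG : K.FacetAdjOver σ F G) :
    Relation.ReflTransGen ((K.splitFlip w C n H).FacetAdjOver σ) (splitFacet w n H F)
      (splitFacet w n H G) := by
  obtain ⟨hF, hG, hF4, hG4, hsub, h3⟩ := hFG
  have hsubF := hsub.trans Finset.inter_subset_left
  have hsubG := hsub.trans Finset.inter_subset_right
  by_cases hw : w ∈ F ∩ G
  · obtain ⟨hwF, hwG⟩ := Finset.mem_inter.mp hw
    have hsub' := Finset.subset_erase.mpr ⟨hsub, hwσ⟩
    by_cases hcol : H (G.erase w) = H (F.erase w)
    · exact D.splitFacet_chain_same ⟨hF, hG, hF4, hG4, by simpa using hw, h3⟩ hcol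
        (hsub'.trans (Finset.subset_insert _ _))
    have heC : (F ∩ G).erase w ⊆ C :=
      not_not.mp fun h => hcol ((D.colour F hF G hG hF4 hG4 hw h3).mpr h)
    have he2 : ((F ∩ G).erase w).card = 2 := by rw [Finset.card_erase_of_mem hw, h3]
    have toF := D.splitFacet_chain_cap hF hF4 hwF
      (Finset.erase_subset_erase w Finset.inter_subset_left) heC he2 rfl
      (hsub'.trans (Finset.subset_insert _ _))
    have toG := D.splitFacet_chain_cap hG hG4 hwG
      (Finset.erase_subset_erase w Finset.inter_subset_right) heC he2 rfl
      (hsub'.trans (Finset.subset_insert _ _))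
    have across := reflTransGen_of_common_triangle (D.cap_mem (H (F.erase w)))
      (D.cap_mem (H (G.erase w))) (D.card_cap _) (D.card_cap _) D.card_eq
      (Finset.subset_insert _ _) (Finset.subset_insert _ _)
      ((hsub'.trans heC).trans (Finset.subset_insert _ _))
      ((hsub'.trans heC).trans (Finset.subset_insert _ _))
    exact (toF.trans across).trans (symm toG)
  · have havoid : ∀ i, n i ∉ F ∩ G := fun i h => D.fresh_notMem hF i (Finset.mem_inter.mp h).1
    exact reflTransGen_of_common_triangle (D.splitFacet_mem hF hF4) (D.splitFacet_mem hG hG4)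
      (by rw [D.card_splitFacet hF, hF4]) (by rw [D.card_splitFacet hG, hG4]) h3
      ((subset_splitFacet_iff havoid).mpr ⟨Finset.inter_subset_left, hw⟩)
      ((subset_splitFacet_iff havoid).mpr ⟨Finset.inter_subset_right, hw⟩)
      ((subset_splitFacet_iff hσ).mpr ⟨hsubF, hwσ⟩) ((subset_splitFacet_iff hσ).mpr ⟨hsubG, hwσ⟩)

theorem sideFacet_chain (D : SplitData K w C n H) (hwτ : w ∉ τ)
    (hFG : K.FacetAdjOver (insert w τ) F G) :
    Relation.ReflTransGen ((K.splitFlip w C n H).FacetAdjOver (insert (n i) τ))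
      (sideFacet w C n H i F) (sideFacet w C n H i G) := by
  obtain ⟨hF, hG, hF4, hG4, hsub, h3⟩ := hFG
  obtain ⟨hw, hsub⟩ := Finset.insert_subset_iff.mp hsub
  obtain ⟨hwF, hwG⟩ := Finset.mem_inter.mp hw
  have hτe : τ ⊆ (F ∩ G).erase w := Finset.subset_erase.mpr ⟨hsub, hwτ⟩
  have hcolour := D.colour F hF G hG hF4 hG4 hw h3
  have heF := Finset.erase_subset_erase w (Finset.inter_subset_left (s₁ := F) (s₂ := G))
  have heG := Finset.erase_subset_erase w (Finset.inter_subset_right (s₁ := F) (s₂ := G))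
  have he2 : ((F ∩ G).erase w).card = 2 := by rw [Finset.card_erase_of_mem hw, h3]
  rw [sideFacet, sideFacet]
  split_ifs with hiF hiG hiG
  · exact D.splitFacet_chain_same ⟨hF, hG, hF4, hG4, by simpa using hw, h3⟩ (hiG.trans hiF.symm)
      (hiF ▸ Finset.insert_subset_insert _ hτe)
  · have heC := not_not.mp fun h => hiG ((hcolour.mpr h).trans hiF)
    exact D.splitFacet_chain_cap hF hF4 hwF heF heC he2 hiF (Finset.insert_subset_insert _ hτe)
  · have heC := not_not.mp fun h => hiF ((hcolour.mpr h).symm.trans hiG)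
    exact symm <|
      D.splitFacet_chain_cap hG hG4 hwG heG heC he2 hiG (Finset.insert_subset_insert _ hτe)
  · exact .refl

theorem exists_splitFacet_chain (D : SplitData K w C n H) (hσ : ∀ i, n i ∉ σ) (hσ2 : σ.card ≤ 2)
    (hA : A ∈ (K.splitFlip w C n H).faces) (hA4 : A.card = 4) (hσA : σ ⊆ A) :
    ∃ F ∈ K.faces, F.card = 4 ∧ σ ⊆ F ∧ w ∉ σ ∧
      Relation.ReflTransGen ((K.splitFlip w C n H).FacetAdjOver σ) (splitFacet w n H F) A := by
  obtain ⟨F, hF, hF4, rfl⟩ | ⟨i, rfl⟩ := D.tetrahedron_splitFlip_cases hA hA4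
  · obtain ⟨hσF, hwσ⟩ := (subset_splitFacet_iff hσ).mp hσA
    exact ⟨F, hF, hF4, hσF, hwσ, .refl⟩
  · rw [Finset.subset_insert_iff_of_notMem (hσ i)] at hσA
    obtain ⟨e, hσe, heC, he2⟩ := D.exists_edge (τ := σ)
      (hσA.ssubset_of_ne fun h => by rw [h, D.card_eq] at hσ2; omega)
    obtain ⟨F, hF, hF4, hw, heF, hi⟩ := D.inDisc_of_ssubset
      (heC.ssubset_of_ne fun h => by rw [h, D.card_eq] at he2; omega) i
    obtain ⟨hσF, hwσ⟩ := Finset.subset_erase.mp (hσe.trans heF)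
    exact ⟨F, hF, hF4, hσF, hwσ, D.splitFacet_chain_cap hF hF4 hw heF heC he2 hi
      (hσe.trans (Finset.subset_insert _ _))⟩

theorem exists_eq_sideFacet (D : SplitData K w C n H) (hτ : ∀ i, n i ∉ τ) (hτ2 : τ.card ≤ 2)
    (hA : A ∈ (K.splitFlip w C n H).faces) (hA4 : A.card = 4) (hτA : insert (n i) τ ⊆ A) :
    ∃ F ∈ K.faces, F.card = 4 ∧ insert w τ ⊆ F ∧ w ∉ τ ∧ A = sideFacet w C n H i F := by
  obtain ⟨hiA, hτA⟩ := Finset.insert_subset_iff.mp hτA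
  obtain ⟨F, hF, hF4, rfl⟩ | ⟨j, rfl⟩ := D.tetrahedron_splitFlip_cases hA hA4
  · obtain ⟨hτF, hwτ⟩ := (subset_splitFacet_iff hτ).mp hτA
    by_cases hw : w ∈ F
    · rw [splitFacet, if_pos hw, Finset.mem_insert] at hiA
      have hi := D.injective <| hiA.resolve_right fun h =>
        D.fresh_notMem hF i (Finset.mem_of_mem_erase h)
      exact ⟨F, hF, hF4, Finset.insert_subset hw hτF, hwτ, by rw [sideFacet, if_pos hi.symm]⟩
    · rw [splitFacet, if_neg hw] at hiA
      exact absurd hiA (D.fresh_notMem hF i)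
  · obtain rfl : i = j := D.injective <|
      (Finset.mem_insert.mp hiA).resolve_right (D.fresh_notMem_missing i)
    rw [Finset.subset_insert_iff_of_notMem (hτ i)] at hτA
    obtain ⟨F, hF, hF4, hw, hτF, hcol⟩ := D.inDisc_of_ssubset
      (hτA.ssubset_of_ne fun h => by rw [h, D.card_eq] at hτ2; omega) (!i)
    obtain ⟨hτF, hwτ⟩ := Finset.subset_erase.mp hτF
    exact ⟨F, hF, hF4, Finset.insert_subset hw hτF, hwτ, by
      rw [sideFacet, if_neg (by rw [hcol]; exact Bool.not_ne_self i)]⟩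

theorem linkConn_splitFlip (D : SplitData K w C n H) (hσ2 : σ.card ≤ 2) :
    (K.splitFlip w C n H).LinkConn σ := by
  refine linkConn_of_facet_chains hσ2 (fun s hs => D.exists_tetrahedron_splitFlip hs) ?_
  intro A hA B hB hA4 hB4 hσA hσB
  obtain ⟨τ, hτ, rfl | ⟨i, rfl⟩⟩ := D.splitFlip_cases hA hσA
  · obtain ⟨F, hF, hF4, hσF, hw, toA⟩ := D.exists_splitFacet_chain hτ hσ2 hA hA4 hσA
    obtain ⟨G, hG, hG4, hσG, -, toB⟩ := D.exists_splitFacet_chain hτ hσ2 hB hB4 hσB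
    have hFG := D.normal.facet_chain (by omega) hF hG hF4 hG4 hσF hσG
    have across := Relation.ReflTransGen.lift' (splitFacet w n H)
      (fun _ _ => D.splitFacet_chain hτ hw) _ _ hFG
    exact ((symm toA).trans across).trans toB
  · rw [Finset.card_insert_of_notMem (hτ i)] at hσ2
    obtain ⟨F, hF, hF4, hτF, hw, rfl⟩ := D.exists_eq_sideFacet hτ (by omega) hA hA4 hσA
    obtain ⟨G, hG, hG4, hτG, -, rfl⟩ := D.exists_eq_sideFacet hτ (by omega) hB hB4 hσB
    have hcard := Finset.card_insert_le w τ
    have hFG := D.normal.facet_chain (by omega) hF hG hF4 hG4 hτF hτG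
    exact Relation.ReflTransGen.lift' (sideFacet w C n H i) (fun _ _ => D.sideFacet_chain hw) _ _
      hFG

theorem normal3_splitFlip (D : SplitData K w C n H) : (K.splitFlip w C n H).Normal3 where
  nonempty := ⟨_, D.cap_mem true⟩
  exists_facet _ hs := D.exists_tetrahedron_splitFlip hs
  card_nbrs _ hr hr3 := D.card_nbrs_splitFlip hr hr3
  linkConn _ hσ := D.linkConn_splitFlip hσ

theorem fresh_false_ne_true (D : SplitData K w C n H) : n false ≠ n true := fun h => by
  simpa using D.injective h

theorem missing_notMem_splitCore (D : SplitData K w C n H) : C ∉ (K.splitCore w n H).faces :=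
  fun h => D.missing ((D.mem_splitCore_of_avoids D.fresh_notMem_missing).mp h).1

theorem mem_splitCore_iff_mem_split (D : SplitData K w C n H) : s ∈ (K.splitCore w n H).faces ↔
    s ∈ (K.split w C n H).faces ∧ ¬ {n false, n true} ⊆ s := by
  rw [D.mem_split]
  constructor
  · refine fun hs => ⟨.inl hs, fun hsub => ?_⟩
    simp only [Finset.insert_subset_iff, Finset.singleton_subset_iff] at hsub
    cases D.eq_of_fresh_mem_splitCore hs hsub.1 hsub.2
  · rintro ⟨hs | ⟨τ, -, rfl⟩, hsub⟩
    · exact hs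
    · exact absurd (Finset.insert_subset_insert _ (by simp)) hsub

theorem insert_insert_mem_split (D : SplitData K w C n H) (hs : ∀ i, n i ∉ s) :
    insert (n false) (insert (n true) s) ∈ (K.split w C n H).faces ↔ s ⊂ C := by
  rw [D.mem_split]
  constructor
  · rintro (h | ⟨τ, hτ, h⟩)
    · exact absurd (Finset.insert_subset_insert _ (by simp)) (D.mem_splitCore_iff_mem_split.mp h).2
    · have hτn : ∀ i, n i ∉ τ := fun i hi => D.fresh_notMem_missing i (hτ.subset hi)
      have herase : ∀ t : Finset ℕ, (∀ i, n i ∉ t) →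
          ((insert (n false) (insert (n true) t)).erase (n false)).erase (n true) = t := by
        intro t ht
        rw [Finset.erase_insert (by simp [ht, D.fresh_false_ne_true]), Finset.erase_insert (ht _)]
      rwa [← herase s hs, h, herase τ hτn]
  · exact fun h => .inr ⟨s, h, rfl⟩

theorem insert_mem_split (D : SplitData K w C n H) (hs : ∀ i, n i ∉ s) :
    insert (n i) s ∈ (K.split w C n H).faces ↔ K.InDisc w H i s := by
  rw [← D.insert_mem_splitCore hs, D.mem_splitCore_iff_mem_split, and_iff_left]
  intro h
  simp only [Finset.insert_subset_iff, Finset.singleton_subset_iff, Finset.mem_insert, hs,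
    or_false] at h
  exact D.fresh_false_ne_true (h.1.trans h.2.symm)

theorem mem_lk_edge_split (D : SplitData K w C n H) :
    s ∈ ((K.split w C n H).lk {n false, n true}).faces ↔ s.Nonempty ∧ s ⊂ C := by
  simp only [mem_lk, Finset.disjoint_insert_right, Finset.disjoint_singleton_right,
    Finset.union_insert, Finset.union_singleton]
  refine and_congr_right fun _ => ⟨fun ⟨hs, h⟩ => ?_, fun h => ?_⟩
  · exact (D.insert_insert_mem_split (Bool.forall_bool.mpr hs)).mp h
  · have hs : ∀ i, n i ∉ s := fun i hi => D.fresh_notMem_missing i (h.subset hi)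
    exact ⟨⟨hs _, hs _⟩, (D.insert_insert_mem_split hs).mpr h⟩

theorem bistellarTwoMove (D : SplitData K w C n H) :
    BistellarTwoMove (K.split w C n H) (K.splitFlip w C n H) := by
  obtain ⟨a, b, c, -, -, -, hC⟩ := Finset.card_eq_three.mp D.card_eq
  refine ⟨n false, n true, a, b, c, ?_, D.fresh_false_ne_true, ?_⟩
  · exact (D.insert_insert_mem_split (s := ∅) (by simp)).mpr D.empty_ssubset
  rw [← hC]
  refine ⟨D.card_eq, D.fresh_notMem_missing _, D.fresh_notMem_missing _, ?_, fun h => ?_, ?_⟩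
  · ext s
    simp only [D.mem_lk_edge_split, properFaces, Finset.mem_filter, Finset.mem_powerset,
      Finset.ssubset_iff_subset_ne, Finset.nonempty_iff_ne_empty]
    tauto
  · refine D.missing_notMem_splitCore (D.mem_splitCore_iff_mem_split.mpr ⟨h, fun hsub => ?_⟩)
    exact D.fresh_notMem_missing _ (hsub (Finset.mem_insert_self _ _))
  · ext s
    simp only [splitFlip, union, Finset.mem_union, mem_ofFacets, D.mem_splitCore_iff_mem_split,
      simplexFaces, Finset.mem_filter, Finset.mem_powerset, Finset.nonempty_iff_ne_empty,
      Finset.mem_image, Finset.mem_univ, true_and, Bool.exists_bool,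
      or_and_right, exists_or, exists_eq_left']
    tauto

theorem mem_split_of_avoids (D : SplitData K w C n H) (hs : ∀ i, n i ∉ s) :
    s ∈ (K.split w C n H).faces ↔ s ∈ K.faces ∧ w ∉ s := by
  rw [← D.mem_splitCore_of_avoids hs, D.mem_splitCore_iff_mem_split, and_iff_left]
  exact fun h => hs _ (h (Finset.mem_insert_self _ _))

theorem lk_inter_lk_split (D : SplitData K w C n H) :
    ((K.split w C n H).lk {n false}).faces ∩ ((K.split w C n H).lk {n true}).faces =
      ((K.split w C n H).lk {n false, n true}).faces := by
  ext s
  rw [D.mem_lk_edge_split, Finset.mem_inter]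
  simp only [mem_lk, Finset.disjoint_singleton_right, Finset.union_singleton]
  constructor
  · rintro ⟨⟨hne, h₀, hs₀⟩, -, h₁, hs₁⟩
    have hs : ∀ i, n i ∉ s := Bool.forall_bool.mpr ⟨h₀, h₁⟩
    have hdisc := (D.insert_mem_split hs).mp hs₀
    refine ⟨hne, (D.subset_of_inDisc hdisc ((D.insert_mem_split hs).mp hs₁)
      Bool.false_ne_true).ssubset_of_ne ?_⟩
    rintro rfl
    exact D.missing (hdisc.mem hne)
  · rintro ⟨hne, h⟩
    have hs : ∀ i, n i ∉ s := fun i hi => D.fresh_notMem_missing i (h.subset hi)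
    have hmem : ∀ i, insert (n i) s ∈ (K.split w C n H).faces := fun i =>
      (D.insert_mem_split hs).mpr (D.inDisc_of_ssubset h i)
    exact ⟨⟨hne, hs _, hmem _⟩, hne, hs _, hmem _⟩

theorem edgeContraction (D : SplitData K w C n H) : EdgeContraction (K.split w C n H) K := by
  refine ⟨n false, n true, (D.insert_insert_mem_split (s := ∅) (by simp)).mpr D.empty_ssubset,
    D.fresh_false_ne_true, D.lk_inter_lk_split, w, ?_, ?_⟩
  · rw [mem_vertexSet, D.mem_split_of_avoids (by simp [D.fresh_ne])]
    simp
  · have hdel : (K.split w C n H).faces.filter (fun s => n false ∉ s ∧ n true ∉ s) =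
        (K.del w).faces := by
      ext s
      rw [Finset.mem_filter, mem_del]
      constructor
      · rintro ⟨hs, hn⟩
        exact (D.mem_split_of_avoids (Bool.forall_bool.mpr hn)).mp hs
      · rintro hs
        have hn : ∀ i, n i ∉ s := D.fresh_notMem hs.1
        exact ⟨(D.mem_split_of_avoids hn).mpr hs, hn _, hn _⟩
    rw [hdel]
    exact D.normal.faces_eq_cone D.vertex_mem

theorem mem_nbrs_fresh (D : SplitData K w C n H) {z : ℕ} :
    z ∈ (K.splitFlip w C n H).nbrs {n i} ↔ K.InDisc w H i {z} := by
  rw [mem_nbrs, Finset.mem_singleton, Finset.pair_comm]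
  by_cases hz : ∃ j, n j = z
  · obtain ⟨j, rfl⟩ := hz
    refine iff_of_false ?_ fun h => D.fresh_notMem (h.mem (by simp)) j (by simp)
    rintro ⟨hne, hmem⟩
    exact hne (congrArg n (D.eq_of_fresh_mem_splitFlip hmem (by simp) (by simp)))
  · push Not at hz
    have hC : {z} ≠ C := fun h => by simpa [← h] using D.card_eq
    rw [D.insert_mem_splitFlip (by simpa using hz), or_iff_left hC, and_iff_right (hz i).symm]

theorem card_nbrs_fresh_add (D : SplitData K w C n H) :
    ((K.splitFlip w C n H).nbrs {n false}).card + ((K.splitFlip w C n H).nbrs {n true}).card =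
      (K.nbrs {w}).card + 3 := by
  have hunion : (K.splitFlip w C n H).nbrs {n false} ∪ (K.splitFlip w C n H).nbrs {n true} =
      K.nbrs {w} := by
    ext z
    rw [Finset.mem_union, D.mem_nbrs_fresh, D.mem_nbrs_fresh, mem_nbrs, Finset.mem_singleton,
      Finset.pair_comm]
    constructor
    · rintro (h | h) <;> exact ⟨by simpa [eq_comm] using h.notMem, h.insert_mem⟩
    · rintro ⟨hz, hwz⟩
      exact Bool.exists_bool.mp (D.normal.exists_inDisc (by simpa [eq_comm] using hz) hwz H)
  have hinter : (K.splitFlip w C n H).nbrs {n false} ∩ (K.splitFlip w C n H).nbrs {n true} = C := by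
    ext z
    rw [Finset.mem_inter, D.mem_nbrs_fresh, D.mem_nbrs_fresh]
    constructor
    · rintro ⟨h₀, h₁⟩
      exact Finset.singleton_subset_iff.mp (D.subset_of_inDisc h₀ h₁ Bool.false_ne_true)
    · intro hz
      have hss : {z} ⊂ C := (Finset.singleton_subset_iff.mpr hz).ssubset_of_ne fun h => by
        simpa [← h] using D.card_eq
      exact ⟨D.inDisc_of_ssubset hss _, D.inDisc_of_ssubset hss _⟩
  rw [← Finset.card_union_add_card_inter, hunion, hinter, D.card_eq]

theorem fnum_del_del_splitFlip (D : SplitData K w C n H) {k : ℕ} (hk : k ≤ 1) :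
    (((K.splitFlip w C n H).del (n false)).del (n true)).fnum k = (K.del w).fnum k := by
  rw [fnum, fnum]
  congr 1
  ext s
  simp only [Finset.mem_filter, mem_del, and_assoc]
  constructor
  · rintro ⟨hs, h₀, h₁, hcard⟩
    obtain h | rfl := (D.mem_splitFlip_of_avoids (Bool.forall_bool.mpr ⟨h₀, h₁⟩)).mp hs
    · exact ⟨h.1, h.2, hcard⟩
    · rw [D.card_eq] at hcard
      omega
  · rintro ⟨hs, hw, hcard⟩
    have hn : ∀ i, n i ∉ s := D.fresh_notMem hs
    exact ⟨(D.mem_splitFlip_of_avoids hn).mpr (.inl ⟨hs, hw⟩), hn _, hn _, hcard⟩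

theorem g2_splitFlip (D : SplitData K w C n H) : (K.splitFlip w C n H).g2 = K.g2 - 1 := by
  have fresh_mem : ∀ i, {n i} ∈ (K.splitFlip w C n H).faces := fun i =>
    mem_of_subset (D.cap_mem i) (by simp) (by simp)
  have fresh_notMem_nbrs : n false ∉ (K.splitFlip w C n H).nbrs {n true} := fun h =>
    D.fresh_notMem ((D.mem_nbrs_fresh.mp h).mem (by simp)) false (by simp)
  have hne := D.fresh_false_ne_true
  have hL := g2_eq_del (fresh_mem false)
  have hL' := g2_eq_del (mem_del.mpr ⟨fresh_mem true, by simpa using hne⟩)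
  have hK := g2_eq_del D.vertex_mem
  have hdel : (((K.splitFlip w C n H).del (n false)).del (n true)).g2 = (K.del w).g2 := by
    rw [g2, g2, D.fnum_del_del_splitFlip zero_le_one, D.fnum_del_del_splitFlip le_rfl]
  rw [nbrs_del (by simpa using hne), Finset.erase_eq_of_notMem fresh_notMem_nbrs, hdel] at hL'
  have := D.card_nbrs_fresh_add
  omega

end SplitData

attribute [ext] SComplex

section MissingTriangle

variable {K : SComplex} {w : ℕ} {C : Finset ℕ}

theorem lk_lk {σ τ : Finset ℕ} (h : Disjoint τ σ) : (K.lk σ).lk τ = K.lk (τ ∪ σ) := by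
  ext s
  simp only [mem_lk, Finset.disjoint_union_right, Finset.disjoint_union_left, Finset.union_assoc]
  have : s.Nonempty → (s ∪ τ).Nonempty := fun hs => hs.mono Finset.subset_union_left
  tauto

theorem mem_lk_singleton {s : Finset ℕ} :
    s ∈ (K.lk {w}).faces ↔ s.Nonempty ∧ w ∉ s ∧ insert w s ∈ K.faces := by
  rw [mem_lk, Finset.disjoint_singleton_right, Finset.union_singleton]

theorem mem_lk_pair {u v : ℕ} {γ : Finset ℕ} :
    γ ∈ (K.lk {u, v}).faces ↔
      γ.Nonempty ∧ u ∉ γ ∧ v ∉ γ ∧ insert u (insert v γ) ∈ K.faces := by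
  have hunion : γ ∪ {u, v} = insert u (insert v γ) := by grind
  rw [mem_lk, hunion, Finset.disjoint_insert_right, Finset.disjoint_singleton_right, and_assoc]

theorem Normal3.exists_triangle_lk (hK : K.Normal3) {s : Finset ℕ} (hs : s ∈ (K.lk {w}).faces) :
    ∃ T ∈ (K.lk {w}).faces, s ⊆ T ∧ T.card = 3 := by
  obtain ⟨hne, hws, hs⟩ := mem_lk_singleton.mp hs
  obtain ⟨F, hF, hsF, hF4⟩ := hK.exists_facet _ hs
  obtain ⟨hwF, hsF⟩ := Finset.insert_subset_iff.mp hsF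
  have hsT : s ⊆ F.erase w := Finset.subset_erase.mpr ⟨hsF, hws⟩
  refine ⟨F.erase w, mem_lk_singleton.mpr ⟨hne.mono hsT, F.notMem_erase w, ?_⟩, hsT, ?_⟩
  · rwa [Finset.insert_erase hwF]
  · rw [Finset.card_erase_of_mem hwF, hF4]

theorem Normal3.card_triangles_lk_le (hK : K.Normal3) {r : Finset ℕ} (hr : r.card = 2) :
    ((K.lk {w}).faces.filter fun T => T.card = 3 ∧ r ⊆ T).card ≤ 2 := by
  have hcofaces := card_cofaces (K.lk {w}) r
  rw [hr] at hcofaces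
  rw [hcofaces]
  obtain h | ⟨z, hz⟩ := ((K.lk {w}).nbrs r).eq_empty_or_nonempty
  · simp [h]
  obtain ⟨-, hz⟩ := mem_nbrs.mp hz
  obtain ⟨-, hwz, hz⟩ := mem_lk_singleton.mp hz
  have hwr : w ∉ r := fun h => hwz (Finset.mem_insert_of_mem h)
  rw [← hK.card_nbrs (insert w r)
    (mem_of_subset hz (Finset.insert_subset_insert w (Finset.subset_insert z r)) (by simp))
    (by rw [Finset.card_insert_of_notMem hwr, hr])]
  refine Finset.card_le_card fun y hy => ?_
  rw [mem_nbrs, mem_lk_singleton] at hy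
  rw [mem_nbrs, Finset.insert_comm]
  exact ⟨by grind, hy.2.2.2⟩

theorem exists_link_colouring (hK : K.Normal3) (hw : K.HasSphereLink 3 w) (hC3 : C.card = 3)
    (hC : ∀ x ∈ C, ∀ y ∈ C, {x, y} ∈ (K.lk {w}).faces) :
    ∃ H : Finset ℕ → Bool, ∀ F ∈ K.faces, ∀ G ∈ K.faces, F.card = 4 → G.card = 4 → w ∈ F ∩ G →
      (F ∩ G).card = 3 → (H (G.erase w) = H (F.erase w) ↔ ¬ (F ∩ G).erase w ⊆ C) := by
  obtain ⟨homeo⟩ := hw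
  have hlink : ∀ x, {x} ∈ (K.lk {w}).faces → ((K.lk {w}).lk {x}).Conn := by
    intro x hx
    obtain ⟨-, hwx, hx⟩ := mem_lk_singleton.mp hx
    rw [lk_lk (Finset.disjoint_singleton_right.mpr hwx), Finset.union_comm]
    exact hK.conn_lk hx Finset.card_le_two
  obtain ⟨H, hH⟩ := exists_two_colouring homeo (fun s hs => hK.exists_triangle_lk hs)
    (fun r hr => hK.card_triangles_lk_le hr) hlink hC3 hC
  refine ⟨H, fun F hF G hG hF4 hG4 hw h3 => ?_⟩
  obtain ⟨hwF, hwG⟩ := Finset.mem_inter.mp hw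
  have triangle : ∀ E ∈ K.faces, E.card = 4 → w ∈ E →
      E.erase w ∈ (K.lk {w}).faces ∧ (E.erase w).card = 3 := by
    intro E hE hE4 hwE
    have hcard : (E.erase w).card = 3 := by rw [Finset.card_erase_of_mem hwE, hE4]
    refine ⟨mem_lk_singleton.mpr ⟨Finset.card_pos.mp (by omega), E.notMem_erase w, ?_⟩, hcard⟩
    rwa [Finset.insert_erase hwE]
  obtain ⟨hFL, hF3⟩ := triangle F hF hF4 hwF
  obtain ⟨hGL, hG3⟩ := triangle G hG hG4 hwG
  have hinter : F.erase w ∩ G.erase w = (F ∩ G).erase w := by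
    rw [Finset.inter_erase, Finset.erase_inter, Finset.erase_idem]
  rw [← hinter]
  exact hH _ hFL _ hGL hF3 hG3 (by rw [hinter, Finset.card_erase_of_mem hw, h3])

theorem InClassR.mem_of_link_edges (hK : K.InClassR) (hw : K.HasSphereLink 3 w) (hC3 : C.card = 3)
    (hwC : w ∉ C) (hC : ∀ x ∈ C, ∀ y ∈ C, {w, x, y} ∈ K.faces) : C ∈ K.faces := by
  by_contra hmissing
  have normal := hK.1.normal3
  have hCL : ∀ x ∈ C, ∀ y ∈ C, {x, y} ∈ (K.lk {w}).faces := fun x hx y hy =>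
    mem_lk_singleton.mpr ⟨by simp, by grind, hC x hx y hy⟩
  obtain ⟨H, hH⟩ := exists_link_colouring normal hw hC3 hCL
  obtain ⟨m, hm⟩ := K.vertexSet.exists_nat_subset_range
  have D : SplitData K w C (fun i => m + i.toNat) H :=
    { normal := normal
      card_eq := hC3
      notMem := hwC
      missing := hmissing
      edge_mem := fun e he he2 => by
        obtain ⟨x, y, -, rfl⟩ := Finset.card_eq_two.mp he2
        exact hC x (he (by simp)) y (he (by simp))
      injective := fun i j h => by cases i <;> cases j <;> simp_all
      fresh := fun i hi => by simpa using hm hi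
      colour := hH }
  have hle := hK.2.2.2.2 _ D.normal3_splitFlip.isNormalPseudomanifold
    (.inr (.inr (.inl ⟨_, D.edgeContraction, D.bistellarTwoMove⟩)))
  rw [D.g2_splitFlip] at hle
  omega

end MissingTriangle

section Deletion

theorem exists_ne_odd_degree_reachable {α : Type*} {N : α → Finset α}
    {S : Finset α} (hsub : ∀ x, N x ⊆ S) (hsymm : ∀ x y, y ∈ N x → x ∈ N y) (hirrefl : ∀ x, x ∉ N x)
    {p : α} (hp : Odd (N p).card) :
    ∃ q ≠ p, Odd (N q).card ∧ Relation.ReflTransGen (fun x y => y ∈ N x) p q := by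
  classical
  let V := {x // Relation.ReflTransGen (fun x y => y ∈ N x) p x}
  have hfinite : {x | Relation.ReflTransGen (fun x y => y ∈ N x) p x}.Finite := by
    refine (insert p S).finite_toSet.subset fun x hx => ?_
    obtain rfl | ⟨y, -, hyx⟩ := hx.cases_tail
    · simp
    · simp [hsub y hyx]
  have : Fintype V := hfinite.fintype
  let G : SimpleGraph V := ⟨fun x y => y.1 ∈ N x.1, ⟨fun x y => hsymm x y⟩, ⟨fun x => hirrefl x⟩⟩
  have hdegree : ∀ x : V, G.degree x = (N x).card := fun x =>
    Finset.card_bij (fun y _ => y.1) (fun y hy => (G.mem_neighborFinset x y).mp hy)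
      (fun _ _ _ _ => Subtype.ext)
      (fun y hy => ⟨⟨y, x.2.tail hy⟩, (G.mem_neighborFinset x _).mpr hy, rfl⟩)
  obtain ⟨q, hqp, hq⟩ := G.exists_ne_odd_degree_of_exists_odd_degree ⟨p, .refl⟩
    (by rwa [hdegree])
  exact ⟨q, fun h => hqp (Subtype.ext h), hdegree q ▸ hq, q.2⟩

variable {K : SComplex} {σ : Finset ℕ} {v : ℕ}

theorem vertAdj_lk_del {x y : ℕ} :
    ((K.del v).lk σ).VertAdj x y ↔
      x ∉ σ ∧ y ∉ σ ∧ insert x (insert y σ) ∈ K.faces ∧ v ∉ insert x (insert y σ) := by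
  rw [vertAdj_lk, mem_del]

theorem Normal3.odd_card_nbrs_erase (hK : K.Normal3) {r : Finset ℕ} (hr : r.card = 3) :
    Odd ((K.nbrs r).erase v).card ↔ v ∈ K.nbrs r := by
  by_cases hrK : r ∈ K.faces
  · have htwo := hK.card_nbrs r hrK hr
    by_cases h : v ∈ K.nbrs r
    · simp [h, Finset.card_erase_of_mem h, htwo]
    · simp [h, htwo]
  · have hempty : K.nbrs r = ∅ := Finset.eq_empty_of_forall_notMem fun z hz =>
      hrK (mem_of_subset (mem_nbrs.mp hz).2 (Finset.subset_insert z _)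
        (Finset.card_pos.mp (by omega)))
    simp [hempty]

theorem Normal3.reflTransGen_around_of_card_eq_two (hK : K.Normal3) (hσ : σ.card = 2) {p q : ℕ}
    (hp : p ∈ K.nbrs (insert v σ)) (hq : q ∈ K.nbrs (insert v σ)) (hv : v ∉ σ) :
    Relation.ReflTransGen ((K.del v).lk σ).VertAdj p q := by
  have htri : insert v σ ∈ K.faces :=
    mem_of_subset (mem_nbrs.mp hp).2 (Finset.subset_insert p _) (by simp)
  have hpair := hK.card_nbrs _ htri (by rw [Finset.card_insert_of_notMem hv, hσ])
  let N : ℕ → Finset ℕ := fun x =>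
    if x ∈ insert v σ then ∅ else (K.nbrs (insert x σ)).erase v
  have mem_N : ∀ x y, y ∈ N x ↔ x ≠ y ∧ ((K.del v).lk σ).VertAdj x y := by
    intro x y
    simp only [N, vertAdj_lk_del]
    split_ifs with hx
    · grind
    · simp only [Finset.mem_erase, mem_nbrs, Finset.insert_comm y x]
      grind
  have odd_N : ∀ x, Odd (N x).card ↔ x ∈ K.nbrs (insert v σ) := by
    intro x
    simp only [N]
    split_ifs with hx
    · simp [mem_nbrs, hx]
    have hxσ : x ∉ σ := fun h => hx (Finset.mem_insert_of_mem h)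
    have hmem : v ∈ K.nbrs (insert x σ) ↔ x ∈ K.nbrs (insert v σ) := by
      simp only [mem_nbrs, Finset.insert_comm v x]
      grind
    rw [← hmem, hK.odd_card_nbrs_erase (by rw [Finset.card_insert_of_notMem hxσ, hσ])]
  obtain ⟨q', hq'p, hq', hpath⟩ := exists_ne_odd_degree_reachable (N := N) (S := K.vertexSet)
    (fun x y hy => mem_vertexSet.mpr <|
      mem_of_subset (vertAdj_lk_del.mp ((mem_N x y).mp hy).2).2.2.1 (by simp) (by simp))
    (fun x y hy => by
      rw [mem_N, vertAdj_lk_del] at hy ⊢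
      rw [Finset.insert_comm y x]
      exact ⟨hy.1.symm, hy.2.2.1, hy.2.1, hy.2.2.2⟩)
    (fun x hx => ((mem_N x x).mp hx).1 rfl) ((odd_N p).mpr hp)
  rw [odd_N] at hq'
  obtain ⟨y, -, hpair⟩ := exists_eq_pair_of_mem hp hpair
  rw [hpair, Finset.mem_insert, Finset.mem_singleton] at hq hq'
  obtain rfl | rfl : q = p ∨ q = q' := hq.imp_right fun h => h.trans (hq'.resolve_left hq'p).symm
  · exact .refl
  · exact Relation.ReflTransGen.mono (fun x y h => ((mem_N x y).mp h).2) _ _ hpath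

theorem Normal3.reflTransGen_around (hK : K.Normal3) (hσ : σ.card ≤ 2) (hv : v ∉ σ) {p q : ℕ}
    (hp : p ∈ K.nbrs (insert v σ)) (hq : q ∈ K.nbrs (insert v σ)) :
    Relation.ReflTransGen ((K.del v).lk σ).VertAdj p q := by
  obtain hσ2 | hσ2 : σ.card = 2 ∨ σ.card ≤ 1 := by omega
  · exact hK.reflTransGen_around_of_card_eq_two hσ2 hp hq hv
  have hcard := Finset.card_insert_of_notMem hv
  refine Relation.ReflTransGen.mono (fun x y h => ?_) _ _
    (hK.linkConn (insert v σ) (by omega) p hp q hq)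
  rw [vertAdj_lk] at h
  rw [vertAdj_lk_del]
  exact ⟨by grind, by grind, mem_of_subset h.2.2 (by grind) (by simp), by grind⟩

/-- A path through `v` is rerouted along the link of `insert v σ`. -/
theorem Normal3.linkConn_del (hK : K.Normal3) (hσ : σ.card ≤ 2) (hv : v ∉ σ) :
    (K.del v).LinkConn σ := by
  intro x hx y hy
  rw [nbrs_del hv, Finset.mem_erase] at hx hy
  have reroute : ∀ y, Relation.ReflTransGen (K.lk σ).VertAdj x y →
      (y ≠ v → Relation.ReflTransGen ((K.del v).lk σ).VertAdj x y) ∧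
      (y = v → ∃ p ∈ K.nbrs (insert v σ), Relation.ReflTransGen ((K.del v).lk σ).VertAdj x p) := by
    intro y hxy
    induction hxy with
    | refl => exact ⟨fun _ => .refl, fun h => absurd h hx.1⟩
    | @tail y z _ hyz ih =>
      rw [vertAdj_lk] at hyz
      by_cases hyv : y = v
      · obtain ⟨p, hp, hxp⟩ := ih.2 hyv
        refine ⟨fun hzv => hxp.trans (hK.reflTransGen_around hσ hv hp ?_), fun _ => ⟨p, hp, hxp⟩⟩
        rw [mem_nbrs, ← hyv, Finset.insert_comm]
        exact ⟨by grind, hyz.2.2⟩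
      · refine ⟨fun hzv => (ih.1 hyv).tail (vertAdj_lk_del.mpr ?_), fun hzv => ⟨y, ?_, ih.1 hyv⟩⟩
        · exact ⟨hyz.1, hyz.2.1, hyz.2.2, by grind⟩
        · rw [mem_nbrs, ← hzv]
          exact ⟨by grind, hyz.2.2⟩
  exact (reroute y (hK.linkConn σ hσ x hx.2 y hy.2)).1 hy.1

end Deletion

/-- The vertex map that identifies `u` and `v` to `w`. -/
def collapse (u v w x : ℕ) : ℕ := if x = u ∨ x = v then w else x

/-- The contraction of the edge `uv` to a new vertex `w`, as the image of `K` under `collapse`. -/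
def contract (K : SComplex) (u v w : ℕ) : SComplex where
  faces := K.faces.image (Finset.image (collapse u v w))
  not_empty_mem := by simp [K.not_empty_mem]
  down_closed := by
    simp only [Finset.mem_image]
    rintro _ ⟨s, hs, rfl⟩ t ht hne
    obtain ⟨t, hts, rfl⟩ := Finset.subset_image_iff.mp ht
    exact ⟨t, K.down_closed s hs t hts (by simpa using hne), rfl⟩

/-- The link condition `lk u ∩ lk v = lk uv` for the edge `uv`, spelled out on faces. The empty `γ`
is allowed, so the condition fails for vertices `u` and `v` that are not adjacent. -/
def LinkCondition (K : SComplex) (u v : ℕ) : Prop :=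
  ∀ γ, u ∉ γ → v ∉ γ → insert u γ ∈ K.faces → insert v γ ∈ K.faces →
    insert u (insert v γ) ∈ K.faces

theorem LinkCondition.symm {K : SComplex} {u v : ℕ} (h : K.LinkCondition u v) :
    K.LinkCondition v u := fun γ hv hu hvγ huγ => Finset.insert_comm u v γ ▸ h γ hu hv huγ hvγ

/-- The situation of an edge contraction: an edge `uv` of a normal 3-pseudomanifold that satisfies
the link condition, and an unused vertex `w` to which it shall be contracted. -/
structure ContractData (K : SComplex) (u v w : ℕ) : Prop where
  normal : K.Normal3
  ne : u ≠ v
  edge_mem : {u, v} ∈ K.faces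
  link : K.LinkCondition u v
  fresh : w ∉ K.vertexSet

theorem contract_comm (K : SComplex) (u v w : ℕ) : K.contract u v w = K.contract v u w := by
  have : collapse u v w = collapse v u w := funext fun x => by simp [collapse, or_comm]
  simp [contract, this]

namespace ContractData

variable {K : SComplex} {u v w : ℕ} {s σ r : Finset ℕ}

theorem symm (D : ContractData K u v w) : ContractData K v u w where
  normal := D.normal
  ne := D.ne.symm
  edge_mem := Finset.pair_comm u v ▸ D.edge_mem
  link := D.link.symm
  fresh := D.fresh

theorem fresh_notMem (D : ContractData K u v w) (hs : s ∈ K.faces) : w ∉ s := fun h =>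
  D.fresh (mem_vertexSet.mpr (mem_of_subset hs (by simpa) (by simp)))

theorem ne_fresh (D : ContractData K u v w) : u ≠ w := by
  rintro rfl
  exact D.fresh_notMem D.edge_mem (by simp)

theorem image_collapse_of_notMem (hu : u ∉ s) (hv : v ∉ s) : s.image (collapse u v w) = s := by
  rw [Finset.image_congr (g := id), Finset.image_id]
  intro x hx
  exact if_neg (by rintro (rfl | rfl) <;> contradiction)

theorem image_collapse_of_mem (h : u ∈ s ∨ v ∈ s) :
    s.image (collapse u v w) = insert w ((s.erase u).erase v) := by
  ext x
  simp only [Finset.mem_image, Finset.mem_insert, Finset.mem_erase, collapse]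
  grind

theorem image_collapse_insert_left (hu : u ∉ s) (hv : v ∉ s) :
    (insert u s).image (collapse u v w) = insert w s := by
  rw [Finset.image_insert, image_collapse_of_notMem hu hv, collapse, if_pos (.inl rfl)]

theorem image_collapse_insert_right (hu : u ∉ s) (hv : v ∉ s) :
    (insert v s).image (collapse u v w) = insert w s := by
  rw [Finset.image_insert, image_collapse_of_notMem hu hv, collapse, if_pos (.inr rfl)]

theorem mem_contract_of_notMem (hw : w ∉ s) :
    s ∈ (K.contract u v w).faces ↔ s ∈ K.faces ∧ u ∉ s ∧ v ∉ s := by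
  simp only [contract, Finset.mem_image]
  constructor
  · rintro ⟨s, hs, rfl⟩
    have hu : u ∉ s := fun h => hw (Finset.mem_image.mpr ⟨u, h, by simp [collapse]⟩)
    have hv : v ∉ s := fun h => hw (Finset.mem_image.mpr ⟨v, h, by simp [collapse]⟩)
    rw [image_collapse_of_notMem hu hv]
    exact ⟨hs, hu, hv⟩
  · rintro ⟨hs, hu, hv⟩
    exact ⟨s, hs, image_collapse_of_notMem hu hv⟩

theorem insert_mem_contract (D : ContractData K u v w) (hw : w ∉ s) :
    insert w s ∈ (K.contract u v w).faces ↔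
      u ∉ s ∧ v ∉ s ∧ (insert u s ∈ K.faces ∨ insert v s ∈ K.faces) := by
  simp only [contract, Finset.mem_image]
  constructor
  · rintro ⟨t, ht, hts⟩
    have hwt := D.fresh_notMem ht
    by_cases huv : u ∈ t ∨ v ∈ t
    · have hs : s = (t.erase u).erase v := by
        rw [image_collapse_of_mem huv] at hts
        rw [← Finset.erase_insert hw, ← hts, Finset.erase_insert (by simp [hwt])]
      refine ⟨by simp [hs], by simp [hs], huv.imp (fun h => ?_) fun h => ?_⟩ <;>
        exact mem_of_subset ht (by grind) (by simp)
    · rw [not_or] at huv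
      rw [image_collapse_of_notMem huv.1 huv.2] at hts
      exact absurd (hts ▸ Finset.mem_insert_self w s) hwt
  · rintro ⟨hu, hv, h | h⟩
    · exact ⟨_, h, image_collapse_insert_left hu hv⟩
    · exact ⟨_, h, image_collapse_insert_right hu hv⟩

theorem nbrs_contract_of_notMem (D : ContractData K u v w) (hu : u ∉ σ) (hv : v ∉ σ) (hw : w ∉ σ) :
    (K.contract u v w).nbrs σ = (K.nbrs σ).image (collapse u v w) := by
  ext z
  have h1 := mem_contract_of_notMem (K := K) (u := u) (v := v) (s := insert z σ) (w := w)
  have h2 := D.insert_mem_contract hw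
  have huw := D.ne_fresh
  have hvw := D.symm.ne_fresh
  have h3 : insert w σ ∉ K.faces := fun h => D.fresh_notMem h (by simp)
  simp only [Finset.mem_image, mem_nbrs, collapse]
  by_cases hzw : z = w
  · subst hzw
    grind
  · grind

theorem nbrs_contract_insert (D : ContractData K u v w) (hu : u ∉ σ) (hv : v ∉ σ) (hw : w ∉ σ) :
    (K.contract u v w).nbrs (insert w σ) =
      (K.nbrs (insert u σ)).erase v ∪ (K.nbrs (insert v σ)).erase u := by
  ext z
  have hwu : insert z (insert u σ) ∈ K.faces → z ≠ w := fun h hzw =>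
    D.fresh_notMem h (by simp [hzw])
  have hwv : insert z (insert v σ) ∈ K.faces → z ≠ w := fun h hzw =>
    D.fresh_notMem h (by simp [hzw])
  simp only [mem_nbrs, Finset.mem_union, Finset.mem_erase, Finset.insert_comm z] at hwu hwv ⊢
  by_cases hzw : z = w
  · grind
  · rw [D.insert_mem_contract (by grind)]
    grind

theorem exists_facet_notMem (D : ContractData K u v w) (hs : s ∈ K.faces) :
    ∃ F ∈ K.faces, F.card = 4 ∧ (u ∉ F ∨ v ∉ F) ∧
      s.image (collapse u v w) ⊆ F.image (collapse u v w) := by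
  obtain ⟨F, hF, hsF, hF4⟩ := D.normal.exists_facet s hs
  have himage : s.image (collapse u v w) ⊆ F.image (collapse u v w) :=
    Finset.image_subset_image hsF
  by_cases h : u ∉ F ∨ v ∉ F
  · exact ⟨F, hF, hF4, h, himage⟩
  rw [not_or, not_not, not_not] at h
  obtain ⟨huF, hvF⟩ := h
  have hr : F.erase v ∈ K.faces := mem_of_subset hF (F.erase_subset v) ⟨u, by grind [D.ne]⟩
  have hr3 : (F.erase v).card = 3 := by rw [Finset.card_erase_of_mem hvF, hF4]
  obtain ⟨p, hp, hpv⟩ := Finset.exists_mem_ne (by rw [D.normal.card_nbrs _ hr hr3]; simp) v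
  obtain ⟨hpF, hpK⟩ := mem_nbrs.mp hp
  refine ⟨_, hpK, by rw [Finset.card_insert_of_notMem hpF, hr3], .inr (by simp [hpv.symm]), ?_⟩
  refine himage.trans ?_
  rw [image_collapse_of_mem (s := F) (.inl huF), image_collapse_of_mem (.inl (by grind [D.ne]))]
  grind

theorem exists_facet_contract (D : ContractData K u v w) (hs : s ∈ (K.contract u v w).faces) :
    ∃ F ∈ (K.contract u v w).faces, s ⊆ F ∧ F.card = 4 := by
  obtain ⟨t, ht, rfl⟩ := Finset.mem_image.mp hs
  obtain ⟨F, hF, hF4, huv, hsF⟩ := D.exists_facet_notMem ht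
  refine ⟨_, Finset.mem_image_of_mem _ hF, hsF, ?_⟩
  rw [Finset.card_image_of_injOn, hF4]
  intro x hx y hy hxy
  have hwF := D.fresh_notMem hF
  rw [Finset.mem_coe] at hx hy
  simp only [collapse] at hxy
  grind

theorem notMem_of_link (D : ContractData K u v w) (hu : u ∉ r) (hv : v ∉ r) (hr : r.card = 3)
    (hur : insert u r ∈ K.faces) : insert v r ∉ K.faces := fun hvr => by
  have hcard := D.normal.card_le_four (D.link r hu hv hur hvr)
  rw [Finset.card_insert_of_notMem (by simp [D.ne, hu]), Finset.card_insert_of_notMem hv] at hcard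
  omega

theorem card_nbrs_contract_of_notMem (D : ContractData K u v w) (hr : r ∈ K.faces)
    (hr3 : r.card = 3) (hu : u ∉ r) (hv : v ∉ r) : ((K.contract u v w).nbrs r).card = 2 := by
  rw [D.nbrs_contract_of_notMem hu hv (D.fresh_notMem hr), Finset.card_image_of_injOn,
    D.normal.card_nbrs r hr hr3]
  have huv := D.notMem_of_link hu hv hr3
  have hw : insert w r ∉ K.faces := fun h => D.fresh_notMem h (by simp)
  intro x hx y hy hxy
  rw [Finset.mem_coe, mem_nbrs] at hx hy
  simp only [collapse] at hxy
  grind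

theorem card_nbrs_contract_of_edge_notMem (D : ContractData K u v w) {e : Finset ℕ}
    (he : e.card = 2) (hu : u ∉ e) (hv : v ∉ e) (huK : insert u e ∈ K.faces)
    (hvK : insert v e ∉ K.faces) : ((K.contract u v w).nbrs (insert w e)).card = 2 := by
  have hw : w ∉ e := fun h => D.fresh_notMem huK (Finset.mem_insert_of_mem h)
  have hempty : K.nbrs (insert v e) = ∅ := Finset.eq_empty_of_forall_notMem fun z hz =>
    hvK (mem_of_subset (mem_nbrs.mp hz).2 (Finset.subset_insert z _) (by simp))
  have hvnbr : v ∉ K.nbrs (insert u e) := fun h =>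
    hvK (mem_of_subset (mem_nbrs.mp h).2 (by grind) (by simp))
  rw [D.nbrs_contract_insert hu hv hw, hempty, Finset.erase_empty, Finset.union_empty,
    Finset.erase_eq_of_notMem hvnbr, D.normal.card_nbrs _ huK
      (by rw [Finset.card_insert_of_notMem hu, he])]

theorem card_nbrs_contract_insert (D : ContractData K u v w) {e : Finset ℕ} (he : e.card = 2)
    (hu : u ∉ e) (hv : v ∉ e) (huK : insert u e ∈ K.faces) :
    ((K.contract u v w).nbrs (insert w e)).card = 2 := by
  by_cases hvK : insert v e ∈ K.faces
  · have hw : w ∉ e := fun h => D.fresh_notMem huK (Finset.mem_insert_of_mem h)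
    have huv := D.link e hu hv huK hvK
    have hvnbr : v ∈ K.nbrs (insert u e) :=
      mem_nbrs.mpr ⟨by simp [hv, D.ne.symm], by rwa [Finset.insert_comm]⟩
    have hunbr : u ∈ K.nbrs (insert v e) := mem_nbrs.mpr ⟨by simp [hu, D.ne], huv⟩
    have hdisj : Disjoint ((K.nbrs (insert u e)).erase v) ((K.nbrs (insert v e)).erase u) := by
      refine Finset.disjoint_left.mpr fun z hzu hzv => ?_
      rw [Finset.mem_erase, mem_nbrs, Finset.insert_comm] at hzu hzv
      have hze : z ∉ e := fun h => hzu.2.1 (Finset.mem_insert_of_mem h)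
      exact D.notMem_of_link (by grind) (by grind)
        (by rw [Finset.card_insert_of_notMem hze, he]) hzu.2.2 hzv.2.2
    rw [D.nbrs_contract_insert hu hv hw, Finset.card_union_of_disjoint hdisj,
      Finset.card_erase_of_mem hvnbr, Finset.card_erase_of_mem hunbr,
      D.normal.card_nbrs _ huK (by rw [Finset.card_insert_of_notMem hu, he]),
      D.normal.card_nbrs _ hvK (by rw [Finset.card_insert_of_notMem hv, he])]
  · exact D.card_nbrs_contract_of_edge_notMem he hu hv huK hvK

theorem card_nbrs_contract (D : ContractData K u v w) (hr : r ∈ (K.contract u v w).faces)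
    (hr3 : r.card = 3) : ((K.contract u v w).nbrs r).card = 2 := by
  by_cases hw : w ∈ r
  · have he : (r.erase w).card = 2 := by rw [Finset.card_erase_of_mem hw, hr3]
    rw [← Finset.insert_erase hw] at hr ⊢
    obtain ⟨hu, hv, hK | hK⟩ := (D.insert_mem_contract (r.notMem_erase w)).mp hr
    · exact D.card_nbrs_contract_insert he hu hv hK
    · rw [contract_comm]
      exact D.symm.card_nbrs_contract_insert he hv hu hK
  · obtain ⟨hrK, hu, hv⟩ := (mem_contract_of_notMem hw).mp hr
    exact D.card_nbrs_contract_of_notMem hrK hr3 hu hv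

theorem linkConn_contract_of_notMem (D : ContractData K u v w) (hσ : σ.card ≤ 2) (hu : u ∉ σ)
    (hv : v ∉ σ) (hw : w ∉ σ) : (K.contract u v w).LinkConn σ := by
  intro x hx y hy
  rw [D.nbrs_contract_of_notMem hu hv hw, Finset.mem_image] at hx hy
  obtain ⟨x, hx, rfl⟩ := hx
  obtain ⟨y, hy, rfl⟩ := hy
  refine Relation.ReflTransGen.lift' (collapse u v w) (fun x y hxy => .single ?_) _ _
    (D.normal.linkConn σ hσ x hx y hy)
  rw [vertAdj_lk] at hxy ⊢
  have himage : (insert x (insert y σ)).image (collapse u v w) =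
      insert (collapse u v w x) (insert (collapse u v w y) σ) := by
    rw [Finset.image_insert, Finset.image_insert, image_collapse_of_notMem hu hv]
  rw [← himage]
  refine ⟨?_, ?_, Finset.mem_image_of_mem _ hxy.2.2⟩ <;> simp only [collapse] <;> grind

theorem reflTransGen_contract_insert (D : ContractData K u v w) (hσ : σ.card ≤ 1) (hu : u ∉ σ)
    (hv : v ∉ σ) {x y : ℕ} (hx : x ∈ (K.nbrs (insert u σ)).erase v)
    (hy : y ∈ (K.nbrs (insert u σ)).erase v) :
    Relation.ReflTransGen ((K.contract u v w).lk (insert w σ)).VertAdj x y := by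
  have hvu : v ∉ insert u σ := by simp [hv, D.ne.symm]
  rw [← nbrs_del hvu] at hx hy
  refine Relation.ReflTransGen.mono (fun a b hab => ?_) _ _
    (D.normal.linkConn_del (by rw [Finset.card_insert_of_notMem hu]; omega) hvu x hx y hy)
  rw [vertAdj_lk_del] at hab
  have hwab := D.fresh_notMem hab.2.2.1
  have hcomm : ∀ z, insert a (insert b (insert z σ)) = insert z (insert a (insert b σ)) := by grind
  rw [hcomm] at hab hwab
  rw [vertAdj_lk, hcomm, D.insert_mem_contract (by grind)]
  grind

theorem exists_common_nbr (D : ContractData K u v w) (hσ : σ.card ≤ 1) (hu : u ∉ σ) (hv : v ∉ σ)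
    (huK : insert u σ ∈ K.faces) (hvK : insert v σ ∈ K.faces) :
    ∃ z, z ∈ (K.nbrs (insert u σ)).erase v ∧ z ∈ (K.nbrs (insert v σ)).erase u := by
  obtain ⟨F, hF, hsub, hF4⟩ := D.normal.exists_facet _ (D.link σ hu hv huK hvK)
  obtain ⟨z, hzF, hz⟩ : ∃ z ∈ F, z ∉ insert u (insert v σ) := by
    refine Finset.exists_mem_notMem_of_card_lt_card ?_
    have := Finset.card_le_two (a := u) (b := v)
    have := Finset.card_union_le {u, v} σ
    rw [Finset.insert_union, Finset.singleton_union] at this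
    omega
  have hsub' := Finset.insert_subset hzF hsub
  refine ⟨z, ?_, ?_⟩ <;> rw [Finset.mem_erase, mem_nbrs] <;>
    refine ⟨by grind, by grind, mem_of_subset hF (subset_trans ?_ hsub') (by simp)⟩ <;> grind

theorem linkConn_contract_insert (D : ContractData K u v w) (hσ : σ.card ≤ 1) (hu : u ∉ σ)
    (hv : v ∉ σ) (hw : w ∉ σ) : (K.contract u v w).LinkConn (insert w σ) := by
  have huu {x y : ℕ} := D.reflTransGen_contract_insert hσ hu hv (x := x) (y := y)
  have hvv {x y : ℕ} := D.symm.reflTransGen_contract_insert hσ hv hu (x := x) (y := y)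
  rw [← contract_comm] at hvv
  have mem_faces {p q x : ℕ} (hx : x ∈ (K.nbrs (insert p σ)).erase q) : insert p σ ∈ K.faces :=
    mem_of_subset (mem_nbrs.mp (Finset.mem_of_mem_erase hx)).2 (Finset.subset_insert x _) (by simp)
  intro x hx y hy
  rw [D.nbrs_contract_insert hu hv hw, Finset.mem_union] at hx hy
  rcases hx with hx | hx <;> rcases hy with hy | hy
  · exact huu hx hy
  · obtain ⟨z, hzu, hzv⟩ := D.exists_common_nbr hσ hu hv (mem_faces hx) (mem_faces hy)
    exact (huu hx hzu).trans (hvv hzv hy)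
  · obtain ⟨z, hzu, hzv⟩ := D.exists_common_nbr hσ hu hv (mem_faces hy) (mem_faces hx)
    exact (hvv hx hzv).trans (huu hzu hy)
  · exact hvv hx hy

theorem notMem_of_mem_contract (D : ContractData K u v w) (hs : s ∈ (K.contract u v w).faces) :
    u ∉ s ∧ v ∉ s := by
  by_cases hw : w ∈ s
  · rw [← Finset.insert_erase hw, D.insert_mem_contract (s.notMem_erase w)] at hs
    have := D.ne_fresh
    have := D.symm.ne_fresh
    grind
  · exact ((mem_contract_of_notMem hw).mp hs).2

theorem linkConn_contract (D : ContractData K u v w) (hσ : σ.card ≤ 2) :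
    (K.contract u v w).LinkConn σ := by
  intro x hx y hy
  obtain ⟨hu, hv⟩ := D.notMem_of_mem_contract (mem_nbrs.mp hx).2
  rw [Finset.mem_insert, not_or] at hu hv
  by_cases hw : w ∈ σ
  · rw [← Finset.insert_erase hw] at hx hy ⊢
    refine D.linkConn_contract_insert ?_ ?_ ?_ (σ.notMem_erase w) x hx y hy
    · rw [Finset.card_erase_of_mem hw]
      omega
    · exact fun h => hu.2 (Finset.mem_of_mem_erase h)
    · exact fun h => hv.2 (Finset.mem_of_mem_erase h)
  · exact D.linkConn_contract_of_notMem hσ hu.2 hv.2 hw x hx y hy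

theorem normal3_contract (D : ContractData K u v w) : (K.contract u v w).Normal3 where
  nonempty := D.normal.nonempty.image _
  exists_facet _ := D.exists_facet_contract
  card_nbrs _ := D.card_nbrs_contract
  linkConn _ := D.linkConn_contract

theorem faces_del_contract : ((K.contract u v w).del w).faces =
    (K.faces.filter fun s => u ∉ s ∧ v ∉ s).filter fun s => w ∉ s := by
  ext s
  simp only [mem_del, Finset.mem_filter]
  exact and_congr_left fun hw => mem_contract_of_notMem hw

theorem lk_inter_lk (D : ContractData K u v w) :
    (K.lk {u}).faces ∩ (K.lk {v}).faces = (K.lk {u, v}).faces := by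
  ext s
  rw [Finset.mem_inter, mem_lk_singleton, mem_lk_singleton, mem_lk_pair]
  constructor
  · rintro ⟨⟨hs, hu, huK⟩, -, hv, hvK⟩
    exact ⟨hs, hu, hv, D.link s hu hv huK hvK⟩
  · rintro ⟨hs, hu, hv, h⟩
    exact ⟨⟨hs, hu, mem_of_subset h (by grind) (by simp)⟩,
      hs, hv, mem_of_subset h (by grind) (by simp)⟩

theorem edgeContraction (D : ContractData K u v w) : EdgeContraction K (K.contract u v w) := by
  have hwK : {w} ∈ (K.contract u v w).faces := by
    rw [← insert_empty_eq, D.insert_mem_contract (by simp)]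
    exact ⟨by simp, by simp, .inl (mem_of_subset D.edge_mem (by simp) (by simp))⟩
  have hdel : ((K.contract u v w).del w).faces = K.faces.filter fun s => u ∉ s ∧ v ∉ s := by
    rw [faces_del_contract, Finset.filter_true_of_mem]
    exact fun s hs => D.fresh_notMem (Finset.mem_filter.mp hs).1
  refine ⟨u, v, D.edge_mem, D.ne, D.lk_inter_lk, w, D.fresh, ?_⟩
  rw [← hdel]
  exact D.normal3_contract.faces_eq_cone hwK

theorem nbrs_inter_nbrs (D : ContractData K u v w) :
    (K.nbrs {u}).erase v ∩ (K.nbrs {v}).erase u = K.nbrs {u, v} := by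
  ext z
  simp only [Finset.mem_inter, Finset.mem_erase, mem_nbrs, Finset.mem_singleton, Finset.mem_insert,
    not_or]
  constructor
  · rintro ⟨⟨hzv, hzu, hu⟩, -, -, hv⟩
    rw [Finset.pair_comm] at hu hv
    have := D.link {z} (by simpa using Ne.symm hzu) (by simpa using Ne.symm hzv) hu hv
    exact ⟨⟨hzu, hzv⟩, mem_of_subset this (by grind) (by simp)⟩
  · rintro ⟨⟨hzu, hzv⟩, h⟩
    exact ⟨⟨hzv, hzu, mem_of_subset h (by grind) (by simp)⟩,
      hzu, hzv, mem_of_subset h (by grind) (by simp)⟩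

theorem g2_contract (D : ContractData K u v w) :
    (K.contract u v w).g2 = K.g2 + 3 - (K.nbrs {u, v}).card := by
  have huK : {u} ∈ K.faces := mem_of_subset D.edge_mem (by simp) (by simp)
  have hvK : {v} ∈ (K.del u).faces :=
    mem_del.mpr ⟨mem_of_subset D.edge_mem (by simp) (by simp), by simpa using D.ne⟩
  have hwK : {w} ∈ (K.contract u v w).faces := by
    rw [← insert_empty_eq, D.insert_mem_contract (by simp)]
    exact ⟨by simp, by simp, .inl (by rwa [insert_empty_eq])⟩
  have hdel : (K.contract u v w).del w = (K.del u).del v := by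
    ext s
    rw [faces_del_contract]
    simp only [mem_del, Finset.mem_filter, and_assoc]
    exact and_congr_right fun hs => by simp [D.fresh_notMem hs]
  have hnbrs := D.nbrs_contract_insert (σ := ∅) (by simp) (by simp) (by simp)
  simp only [insert_empty_eq] at hnbrs
  have hcard := Finset.card_union_add_card_inter ((K.nbrs {u}).erase v) ((K.nbrs {v}).erase u)
  have hv : v ∈ K.nbrs {u} :=
    mem_nbrs.mpr ⟨by simpa using D.ne.symm, Finset.pair_comm u v ▸ D.edge_mem⟩
  have hpos := Finset.card_erase_add_one hv
  rw [D.nbrs_inter_nbrs] at hcard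
  rw [g2_eq_del hwK, g2_eq_del huK, g2_eq_del hvK, hdel, hnbrs, nbrs_del (by simpa using D.ne)]
  omega

end ContractData

-- The contraction of an edge of larger degree would lower `g₂`.
theorem InClassR.card_nbrs_le_three {K : SComplex} (hK : K.InClassR) {u v : ℕ} (hne : u ≠ v)
    (huv : {u, v} ∈ K.faces) (hlink : K.LinkCondition u v) : (K.nbrs {u, v}).card ≤ 3 := by
  obtain ⟨w, hw⟩ := Infinite.exists_notMem_finset K.vertexSet
  have D : ContractData K u v w := ⟨hK.1.normal3, hne, huv, hlink, hw⟩
  have hg2 := hK.2.2.2.2 _ D.normal3_contract.isNormalPseudomanifold (.inr (.inl D.edgeContraction))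
  have := D.g2_contract
  omega

section Homeomorph

variable {A B : SComplex} {e : Equiv.Perm ℕ}

theorem comp_symm_mem_realSpace (h : ∀ s ∈ A.faces, s.image e ∈ B.faces) {x : ℕ → ℝ}
    (hx : x ∈ A.realSpace) : x ∘ e.symm ∈ B.realSpace := by
  obtain ⟨hnonneg, s, hs, hsupp, hsum⟩ := hx
  refine ⟨fun i => hnonneg _, s.image e, h s hs, fun i hi => ?_, ?_⟩
  · exact Finset.mem_image.mpr ⟨e.symm i, hsupp _ hi, e.apply_symm_apply i⟩
  · rw [Finset.sum_image e.injective.injOn]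
    simpa using hsum

theorem nonempty_realSpace_homeomorph (h : ∀ s ∈ A.faces, s.image e ∈ B.faces)
    (h' : ∀ s ∈ B.faces, s.image e.symm ∈ A.faces) : Nonempty (A.realSpace ≃ₜ B.realSpace) := by
  refine ⟨(Homeomorph.piCongrLeft (Y := fun _ => ℝ) e).subtype fun x => ?_⟩
  have hcomp : Homeomorph.piCongrLeft (Y := fun _ => ℝ) e x = x ∘ e.symm := funext fun i => by
    obtain ⟨i, rfl⟩ := e.surjective i
    rw [Homeomorph.piCongrLeft_apply_apply, Function.comp_apply, e.symm_apply_apply]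
  rw [hcomp]
  refine ⟨comp_symm_mem_realSpace h, fun hx => ?_⟩
  have := comp_symm_mem_realSpace h' hx
  rwa [Function.comp_assoc, Equiv.symm_symm, Equiv.symm_comp_self] at this

theorem image_mem_lk {K : SComplex} (h : ∀ s ∈ K.faces, s.image e ∈ K.faces) {w : ℕ}
    {s : Finset ℕ} (hs : s ∈ (K.lk {w}).faces) : s.image e ∈ (K.lk {e w}).faces := by
  obtain ⟨hne, hws, hs⟩ := mem_lk_singleton.mp hs
  refine mem_lk_singleton.mpr ⟨hne.image _, ?_, ?_⟩
  · rwa [e.injective.mem_finset_image]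
  · rw [← Finset.image_insert]
    exact h _ hs

theorem HasSphereLink.perm {K : SComplex} {d w : ℕ} (hw : K.HasSphereLink d w)
    (h : ∀ s ∈ K.faces, s.image e ∈ K.faces) (h' : ∀ s ∈ K.faces, s.image e.symm ∈ K.faces) :
    K.HasSphereLink d (e w) := by
  obtain ⟨homeo⟩ := nonempty_realSpace_homeomorph (fun _ => image_mem_lk h (w := w)) fun s hs => by
    simpa using image_mem_lk h' hs
  exact hw.map homeo.symm.trans

end Homeomorph

section SimplexBoundary

variable {K : SComplex} {V s : Finset ℕ}

theorem mem_of_card_lt (hV : ∀ x ∈ V, V.erase x ∈ K.faces) (hsV : s ⊆ V)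
    (hcard : s.card < V.card) (hs : s.Nonempty) : s ∈ K.faces := by
  obtain ⟨x, hx, hxs⟩ := Finset.exists_mem_notMem_of_card_lt_card hcard
  exact mem_of_subset (hV x hx) (Finset.subset_erase.mpr ⟨hsV, hxs⟩) hs

theorem Normal3.subset_of_boundary (hK : K.Normal3) (hV5 : V.card = 5)
    (hV : ∀ x ∈ V, V.erase x ∈ K.faces) (hs : s ∈ K.faces) : s ⊆ V := by
  obtain ⟨F, hF, hsF, hF4⟩ := hK.exists_facet s hs
  obtain ⟨p, hp⟩ := Finset.card_pos.mp (by omega : 0 < V.card)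
  refine hsF.trans (hK.facet_induction (P := (· ⊆ V)) (hV p hp)
    (by rw [Finset.card_erase_of_mem hp, hV5]) (V.erase_subset p) ?_ F hF hF4)
  intro G hG G' hG' _ _ hr3 hGV
  have hrV : G ∩ G' ⊆ V := Finset.inter_subset_left.trans hGV
  have hr : G ∩ G' ∈ K.faces :=
    mem_of_subset hG Finset.inter_subset_left (Finset.card_pos.mp (by omega))
  have hsub : V \ (G ∩ G') ⊆ K.nbrs (G ∩ G') := fun x hx => by
    obtain ⟨hxV, hxr⟩ := Finset.mem_sdiff.mp hx
    exact mem_nbrs.mpr ⟨hxr, mem_of_card_lt hV (Finset.insert_subset hxV hrV)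
      (by rw [Finset.card_insert_of_notMem hxr]; omega) (by simp)⟩
  have hnbrs := Finset.eq_of_subset_of_card_le hsub
    (by rw [hK.card_nbrs _ hr hr3, Finset.card_sdiff_of_subset hrV]; omega)
  intro x hx
  by_cases hxr : x ∈ G ∩ G'
  · exact hrV hxr
  · refine (Finset.mem_sdiff.mp (hnbrs ▸ mem_nbrs.mpr ⟨hxr, ?_⟩)).1
    exact mem_of_subset hG' (Finset.insert_subset hx Finset.inter_subset_right) (by simp)

-- `K` is the boundary of the simplex `V`, so any permutation of `V` is an automorphism of `K`.
theorem Normal3.hasSphereLink_of_boundary (hK : K.Normal3) (hV5 : V.card = 5)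
    (hV : ∀ x ∈ V, V.erase x ∈ K.faces) {t w : ℕ} (hw : K.HasSphereLink 3 w) (hwV : w ∈ V)
    (ht : {t} ∈ K.faces) : K.HasSphereLink 3 t := by
  have hsubV {s : Finset ℕ} (hs : s ∈ K.faces) : s ⊆ V := hK.subset_of_boundary hV5 hV hs
  have htV : t ∈ V := hsubV ht (by simp)
  have hswap : ∀ s ∈ K.faces, s.image (Equiv.swap w t) ∈ K.faces := fun s hs => by
    refine mem_of_card_lt hV ?_ ?_ ((nonempty_of_mem hs).image _)
    · refine Finset.image_subset_iff.mpr fun x hx => ?_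
      have := hsubV hs hx
      rw [Equiv.swap_apply_def]
      split_ifs <;> assumption
    · have := hK.card_le_four hs
      have := Finset.card_image_le (s := s) (f := Equiv.swap w t)
      omega
  simpa using hw.perm hswap (by rwa [Equiv.symm_swap])

end SimplexBoundary

namespace InClassR

variable {K : SComplex} {u v w : ℕ} {C γ : Finset ℕ}

theorem insert_mem_of_mem (hK : K.InClassR) (hC3 : C.card = 3) (hwC : w ∉ C) (hCK : C ∈ K.faces)
    (hC : ∀ x ∈ C, ∀ y ∈ C, {w, x, y} ∈ K.faces) : insert w C ∈ K.faces := by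
  have hfacets : ∀ x ∈ insert w C, (insert w C).erase x ∈ K.faces := by
    intro x hx
    rw [Finset.mem_insert] at hx
    rcases hx with rfl | hx
    · rwa [Finset.erase_insert hwC]
    · obtain ⟨y, z, -, hyz⟩ := Finset.card_eq_two.mp (by rw [Finset.card_erase_of_mem hx, hC3])
      rw [Finset.erase_insert_of_ne (by rintro rfl; contradiction), hyz]
      have hsub := C.erase_subset x
      rw [hyz] at hsub
      exact hC y (hsub (by simp)) z (hsub (by simp))
  refine hK.2.2.2.1 _ (by rw [Finset.card_insert_of_notMem hwC, hC3]) fun s hs => ?_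
  rw [properFaces, Finset.mem_filter, Finset.mem_powerset] at hs
  obtain ⟨hsub, hne, hssub⟩ := hs
  exact mem_of_card_lt hfacets hsub (Finset.card_lt_card (hsub.ssubset_of_ne hssub))
    (Finset.nonempty_iff_ne_empty.mpr hne)

theorem insert_mem_of_link_edges (hK : K.InClassR) (hw : K.HasSphereLink 3 w) (hC3 : C.card = 3)
    (hwC : w ∉ C) (hC : ∀ x ∈ C, ∀ y ∈ C, {w, x, y} ∈ K.faces) : insert w C ∈ K.faces :=
  hK.insert_mem_of_mem hC3 hwC (hK.mem_of_link_edges hw hC3 hwC hC) hC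

theorem insert_insert_pair_mem (hK : K.InClassR) (hws : K.HasSphereLink 3 w) (hne : u ≠ v)
    (hu : u ∉ γ) (hv : v ∉ γ) (huK : insert u γ ∈ K.faces) (hvK : insert v γ ∈ K.faces)
    (hw : w ∈ γ) (huvw : {u, v, w} ∈ K.faces) {z : ℕ} (hz : z ∈ γ) :
    {u, v, w, z} ∈ K.faces := by
  obtain rfl | hzw := eq_or_ne z w
  · simpa using huvw
  have hwC : w ∉ ({u, v, z} : Finset ℕ) := by grind
  have : insert w {u, v, z} ∈ K.faces := by
    refine hK.insert_mem_of_link_edges hws (Finset.card_eq_three.mpr ⟨u, v, z, ?_⟩) hwC ?_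
    · exact ⟨hne, by grind, by grind, rfl⟩
    · have huwz : {u, w, z} ∈ K.faces := mem_of_subset huK (by grind) (by simp)
      have hvwz : {v, w, z} ∈ K.faces := mem_of_subset hvK (by grind) (by simp)
      have key : ∀ x ∈ ({u, v, z} : Finset ℕ), ∀ y ∈ ({u, v, z} : Finset ℕ),
        ({w, x, y} : Finset ℕ) ⊆ {u, v, w} ∨ ({w, x, y} : Finset ℕ) ⊆ {u, w, z} ∨
          ({w, x, y} : Finset ℕ) ⊆ {v, w, z} := by grind
      intro x hx y hy
      obtain h | h | h := key x hx y hy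
      · exact mem_of_subset huvw h (by simp)
      · exact mem_of_subset huwz h (by simp)
      · exact mem_of_subset hvwz h (by simp)
  convert this using 1
  grind

theorem erase_insert_insert_mem (hK : K.InClassR) (hws : K.HasSphereLink 3 w) (hne : u ≠ v)
    (hu : u ∉ γ) (hv : v ∉ γ) (huK : insert u γ ∈ K.faces) (hvK : insert v γ ∈ K.faces)
    (hw : w ∈ γ) (huvw : {u, v, w} ∈ K.faces) (hγ3 : γ.card = 3) :
    ∀ x ∈ insert u (insert v γ), (insert u (insert v γ)).erase x ∈ K.faces := by
  have hpair {z : ℕ} (hz : z ∈ γ) : {u, v, w, z} ∈ K.faces :=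
    hK.insert_insert_pair_mem hws hne hu hv huK hvK hw huvw hz
  have huvy : ∀ y ∈ insert v γ, {u, v, y} ∈ K.faces := by
    intro y hy
    obtain rfl | hy := Finset.mem_insert.mp hy
    · exact mem_of_subset huvw (by simp) (by simp)
    · exact mem_of_subset (hpair hy) (by grind) (by simp)
  have hfacet : insert u (insert v (γ.erase w)) ∈ K.faces := by
    refine hK.insert_mem_of_mem ?_ (by grind) (mem_of_subset hvK (by grind) (by simp)) ?_
    · rw [Finset.card_insert_of_notMem (by grind), Finset.card_erase_of_mem hw, hγ3]
    intro x hx y hy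
    by_cases hxv : x = v
    · exact hxv ▸ huvy y (by grind)
    by_cases hyv : y = v
    · exact hyv ▸ Finset.pair_comm v x ▸ huvy x (by grind)
    exact mem_of_subset huK (by grind) (by simp)
  intro x hx
  have hcases : x = u ∨ x = v ∨ x = w ∨ x ∈ γ.erase w := by grind
  obtain rfl | rfl | rfl | hxw := hcases
  · rwa [Finset.erase_insert (by grind)]
  · rwa [Finset.erase_insert_of_ne hne, Finset.erase_insert hv]
  · rwa [Finset.erase_insert_of_ne (by grind), Finset.erase_insert_of_ne (by grind)]
  · have hcard : ((γ.erase w).erase x).card = 1 := by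
      rw [Finset.card_erase_of_mem hxw, Finset.card_erase_of_mem hw, hγ3]
    obtain ⟨z, hz⟩ := Finset.card_eq_one.mp hcard
    have hzγ : z ∈ (γ.erase w).erase x := by simp [hz]
    exact mem_of_subset (hpair (z := z) (by grind)) (by grind) ⟨u, by grind⟩

theorem exists_isSingular (hK : K.InClassR) : ∃ t, K.IsSingular t :=
  Set.nonempty_of_ncard_ne_zero (Nat.one_le_iff_ne_zero.mp hK.2.1)

theorem insert_insert_mem (hK : K.InClassR) (hws : K.HasSphereLink 3 w) (hne : u ≠ v)
    (hu : u ∉ γ) (hv : v ∉ γ) (huK : insert u γ ∈ K.faces) (hvK : insert v γ ∈ K.faces)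
    (hw : w ∈ γ) (huvw : {u, v, w} ∈ K.faces) : insert u (insert v γ) ∈ K.faces := by
  by_cases hsmall : ∃ z ∈ γ, γ ⊆ {w, z}
  · obtain ⟨z, hz, hγ⟩ := hsmall
    exact mem_of_subset (hK.insert_insert_pair_mem hws hne hu hv huK hvK hw huvw hz)
      (by grind) (by simp)
  have hγ3 : γ.card = 3 := by
    push Not at hsmall
    obtain ⟨x, hx, hxw⟩ := Finset.not_subset.mp (hsmall w hw)
    obtain ⟨y, hy, hywx⟩ := Finset.not_subset.mp (hsmall x hx)
    have hle := hK.1.normal3.card_le_four huK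
    have hge := Finset.card_le_card (show {w, x, y} ⊆ γ by grind)
    rw [Finset.card_eq_three.mpr ⟨w, x, y, by grind, by grind, by grind, rfl⟩] at hge
    rw [Finset.card_insert_of_notMem hu] at hle
    omega
  have hV5 : (insert u (insert v γ)).card = 5 := by
    rw [Finset.card_insert_of_notMem (by simp [hne, hu]), Finset.card_insert_of_notMem hv, hγ3]
  obtain ⟨t, ht, htsing⟩ := hK.exists_isSingular
  exact absurd (hK.1.normal3.hasSphereLink_of_boundary hV5
    (hK.erase_insert_insert_mem hws hne hu hv huK hvK hw huvw hγ3) hws (by simp [hw]) ht) htsing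

theorem nbrs_insert_edge (hK : K.InClassR) (hne : u ≠ v) (huv : {u, v} ∈ K.faces)
    (hlink : K.LinkCondition u v) {x : ℕ} (hx : x ∈ K.nbrs {u, v}) :
    (K.nbrs {u, v}).card = 3 ∧ K.nbrs (insert x {u, v}) = (K.nbrs {u, v}).erase x := by
  obtain ⟨hxuv, hxK⟩ := mem_nbrs.mp hx
  have hsub : K.nbrs (insert x {u, v}) ⊆ (K.nbrs {u, v}).erase x := fun y hy => by
    obtain ⟨hy, hyK⟩ := mem_nbrs.mp hy
    refine Finset.mem_erase.mpr ⟨by grind, mem_nbrs.mpr ⟨by grind, ?_⟩⟩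
    exact mem_of_subset hyK (by grind) (by simp)
  have hcard := hK.1.normal3.card_nbrs _ hxK
    (by rw [Finset.card_insert_of_notMem hxuv, Finset.card_pair hne])
  have hle := Finset.card_le_card hsub
  have hN3 := hK.card_nbrs_le_three hne huv hlink
  rw [Finset.card_erase_of_mem hx] at hle
  exact ⟨by omega,
    Finset.eq_of_subset_of_card_le hsub (by rw [Finset.card_erase_of_mem hx]; omega)⟩

-- If the link condition holds, the contraction of `uv` does not lower `g₂`, so `lk uv` is a
-- triangle; being filled in `lk u`, this triangle joined with `uv` would be a 4-simplex.
theorem not_linkCondition (hK : K.InClassR) (hne : u ≠ v) (huv : {u, v} ∈ K.faces)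
    (hu : K.HasSphereLink 3 u) : ¬ K.LinkCondition u v := fun hlink => by
  have normal := hK.1.normal3
  obtain ⟨F, hF, huvF, hF4⟩ := normal.exists_facet _ huv
  obtain ⟨x, hxF, hxuv⟩ := Finset.exists_mem_notMem_of_card_lt_card
    (show ({u, v} : Finset ℕ).card < F.card by rw [Finset.card_pair hne]; omega)
  have hx : x ∈ K.nbrs {u, v} :=
    mem_nbrs.mpr ⟨hxuv, mem_of_subset hF (Finset.insert_subset hxF huvF) (by simp)⟩
  set N := K.nbrs {u, v}
  have hN3 : N.card = 3 := (hK.nbrs_insert_edge hne huv hlink hx).1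
  have hedges : ∀ x ∈ N, ∀ y ∈ N, insert x (insert y {u, v}) ∈ K.faces := by
    intro x hx y hy
    obtain rfl | hxy := eq_or_ne x y
    · simpa using (mem_nbrs.mp hx).2
    · refine (mem_nbrs.mp (?_ : x ∈ K.nbrs (insert y {u, v}))).2
      rw [(hK.nbrs_insert_edge hne huv hlink hy).2]
      exact Finset.mem_erase.mpr ⟨hxy, hx⟩
  have huN : u ∉ N := fun h => by simpa using (mem_nbrs.mp h).1
  have hvN : v ∉ N := fun h => by simpa using (mem_nbrs.mp h).1
  have huK : insert u N ∈ K.faces := hK.insert_mem_of_link_edges hu hN3 huN fun x hx y hy =>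
    mem_of_subset (hedges x hx y hy) (by grind) (by simp)
  have hvK : insert v N ∈ K.faces := hK.insert_mem_of_mem hN3 hvN
    (mem_of_subset huK (Finset.subset_insert u N) (Finset.card_pos.mp (by omega)))
    fun x hx y hy => mem_of_subset (hedges x hx y hy) (by grind) (by simp)
  have hcard := normal.card_le_four (hlink N huN hvN huK hvK)
  rw [Finset.card_insert_of_notMem (by simp [hne, huN]), Finset.card_insert_of_notMem hvN] at hcard
  omega

end InClassR

section LinkDifference

variable {K : SComplex} {u v w : ℕ} {γ τ : Finset ℕ}

theorem mem_lk_inter_lk_sdiff :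
    γ ∈ ((K.lk {u}).faces ∩ (K.lk {v}).faces) \ (K.lk {u, v}).faces ↔
      γ.Nonempty ∧ u ∉ γ ∧ v ∉ γ ∧ insert u γ ∈ K.faces ∧ insert v γ ∈ K.faces ∧
        insert u (insert v γ) ∉ K.faces := by
  rw [Finset.mem_sdiff, Finset.mem_inter, mem_lk_singleton, mem_lk_singleton, mem_lk_pair]
  tauto

theorem lk_inter_lk_sdiff_nonempty (huv : {u, v} ∈ K.faces) (h : ¬ K.LinkCondition u v) :
    (((K.lk {u}).faces ∩ (K.lk {v}).faces) \ (K.lk {u, v}).faces).Nonempty := by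
  rw [LinkCondition] at h
  push Not at h
  obtain ⟨γ, hu, hv, huK, hvK, huvK⟩ := h
  have hγ : γ.Nonempty := Finset.nonempty_iff_ne_empty.mpr fun h => huvK (by simpa [h] using huv)
  exact ⟨γ, mem_lk_inter_lk_sdiff.mpr ⟨hγ, hu, hv, huK, hvK, huvK⟩⟩

theorem mem_lk_inter_lk_sdiff_of_subset
    (hγ : γ ∈ ((K.lk {u}).faces ∩ (K.lk {v}).faces) \ (K.lk {u, v}).faces)
    (hlk : ∀ w ∈ γ, {w} ∉ (K.lk {u, v}).faces) (hτγ : τ ⊆ γ) (hτ : τ.Nonempty) :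
    τ ∈ ((K.lk {u}).faces ∩ (K.lk {v}).faces) \ (K.lk {u, v}).faces := by
  rw [Finset.mem_sdiff, Finset.mem_inter] at hγ ⊢
  have hne := hτ.ne_empty
  obtain ⟨w, hw⟩ := hτ
  exact ⟨⟨(K.lk {u}).down_closed γ hγ.1.1 τ hτγ hne, (K.lk {v}).down_closed γ hγ.1.2 τ hτγ hne⟩,
    fun h => hlk w (hτγ hw) (mem_of_subset h (by simpa) (by simp))⟩

theorem InClassR.singleton_notMem_lk (hK : K.InClassR) (hne : u ≠ v)
    (hsphere : ∀ w, {w} ∈ (K.lk {u, v}).faces → K.HasSphereLink 3 w)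
    (hγ : γ ∈ ((K.lk {u}).faces ∩ (K.lk {v}).faces) \ (K.lk {u, v}).faces) (hw : w ∈ γ) :
    {w} ∉ (K.lk {u, v}).faces := fun hwlk => by
  obtain ⟨-, hu, hv, huK, hvK, huvK⟩ := mem_lk_inter_lk_sdiff.mp hγ
  obtain ⟨-, -, -, huvw⟩ := mem_lk_pair.mp hwlk
  exact huvK (hK.insert_insert_mem (hsphere w hwlk) hne hu hv huK hvK hw huvw)

end LinkDifference

theorem statement5_general {K : SComplex} {u v : ℕ} (hK : K.InClassR)
    (huv : {u, v} ∈ K.faces) (hne : u ≠ v) (hsphere : K.HasSphereLink 3 u ∨ K.HasSphereLink 3 v)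
    (hlk : ∀ w, {w} ∈ (K.lk {u, v}).faces → K.HasSphereLink 3 w) :
    let S : Finset (Finset ℕ) :=
      ((K.lk {u}).faces ∩ (K.lk {v}).faces) \ (K.lk {u, v}).faces
    S.Nonempty ∧
    (∀ γ ∈ S, ∀ τ ⊆ γ, τ ≠ ∅ → τ ∈ S) ∧
    (∀ γ ∈ S, ∀ w ∈ γ, ({w} : Finset ℕ) ∉ (K.lk {u, v}).faces) ∧
    ¬ ∃ z w : ℕ, ({z} : Finset ℕ) ∈ S ∧ ({w} : Finset ℕ) ∈ (K.lk {u, v}).faces ∧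
      ({z, w} : Finset ℕ) ∈ S := by
  intro S
  have hlink : ¬ K.LinkCondition u v := hsphere.elim (hK.not_linkCondition hne huv) fun hv h =>
    hK.not_linkCondition hne.symm (Finset.pair_comm u v ▸ huv) hv h.symm
  have hinterior : ∀ γ ∈ S, ∀ w ∈ γ, {w} ∉ (K.lk {u, v}).faces := fun γ hγ w hw =>
    hK.singleton_notMem_lk hne hlk hγ hw
  refine ⟨lk_inter_lk_sdiff_nonempty huv hlink, fun γ hγ τ hτγ hτ => ?_, hinterior, ?_⟩
  · exact mem_lk_inter_lk_sdiff_of_subset hγ (hinterior γ hγ) hτγ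
      (Finset.nonempty_iff_ne_empty.mpr hτ)
  · rintro ⟨z, w, -, hw, hzw⟩
    exact hinterior _ hzw w (by simp) hw

section UniqueSingularVertex

variable {K : SComplex} {t u v w : ℕ}

theorem hasSphereLink_of_ne (hsing : {w | K.IsSingular w} = {t}) (hw : {w} ∈ K.faces)
    (hwt : w ≠ t) : K.HasSphereLink 3 w :=
  not_not.mp fun h => hwt ((Set.ext_iff.mp hsing w).mp ⟨hw, h⟩)

theorem hasSphereLink_or_hasSphereLink (hsing : {w | K.IsSingular w} = {t})
    (huv : {u, v} ∈ K.faces) (hne : u ≠ v) : K.HasSphereLink 3 u ∨ K.HasSphereLink 3 v := by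
  obtain rfl | hut := eq_or_ne u t
  · exact .inr (hasSphereLink_of_ne hsing (mem_of_subset huv (by simp) (by simp)) hne.symm)
  · exact .inl (hasSphereLink_of_ne hsing (mem_of_subset huv (by simp) (by simp)) hut)

theorem hasSphereLink_of_mem_lk (hsing : {w | K.IsSingular w} = {t})
    (huvt : {u, v} ∉ (K.lk {t}).faces) (hw : {w} ∈ (K.lk {u, v}).faces) :
    K.HasSphereLink 3 w := by
  obtain ⟨-, hu, hv, huvw⟩ := mem_lk_pair.mp hw
  refine hasSphereLink_of_ne hsing (mem_of_subset huvw (by simp) (by simp)) ?_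
  rintro rfl
  refine huvt (mem_lk_singleton.mpr ⟨by simp, by grind, ?_⟩)
  rwa [Finset.insert_comm w u, Finset.pair_comm w v]

end UniqueSingularVertex

/-- Lemma 3.4: in the class `R` with a unique singular vertex `t`, for any edge `uv`
not in `lk(t)`, the set `lk(u) ∩ lk(v) − lk(uv)` is a nonempty closed subcomplex
contained in the interiors of the discs `lk(u) − st(v, lk(u))` and
`lk(v) − st(u, lk(v))`; in particular, there is no vertex `z` of it and vertex
`w ∈ lk(uv)` with the edge `zw` in `lk(u) ∩ lk(v) − lk(uv)`. -/
theorem statement5 (K : SComplex) (t u v : ℕ) (hK : InClassR K)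
    (hsing : {w | K.IsSingular w} = {t})
    (huv : ({u, v} : Finset ℕ) ∈ K.faces) (hne : u ≠ v)
    (hnotlk : ({u, v} : Finset ℕ) ∉ (K.lk {t}).faces) :
    let S : Finset (Finset ℕ) :=
      ((K.lk {u}).faces ∩ (K.lk {v}).faces) \ (K.lk {u, v}).faces
    S.Nonempty ∧
    (∀ γ ∈ S, ∀ τ ⊆ γ, τ ≠ ∅ → τ ∈ S) ∧
    (∀ γ ∈ S, ∀ w ∈ γ, ({w} : Finset ℕ) ∉ (K.lk {u, v}).faces) ∧
    ¬ ∃ z w : ℕ, ({z} : Finset ℕ) ∈ S ∧ ({w} : Finset ℕ) ∈ (K.lk {u, v}).faces ∧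
      ({z, w} : Finset ℕ) ∈ S := by
  exact statement5_general hK huv hne (hasSphereLink_or_hasSphereLink hsing huv hne)
    fun _ => hasSphereLink_of_mem_lk hsing hnotlk

end SComplex
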